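/- arXiv:1007.1697 — 10 statements merged into one kernel-verified Lean document; each statement's English description precedes it below -/
import Mathlib

section
/- Let p be a prime and n a positive integer coprime to p. A linear subspace S of F_p^n × F_p^n is separately cyclic if and only if there exist polynomials g(X), f(X), h(X) in F_p[X] such that g(X) and h(X) divide X^n − 1 in F_p[X], and S, viewed as a set of pairs of polynomials in R × R for R = F_p[X]/(X^n−1), is exactly the set of pairs (a(X)g(X), a(X)f(X) + b(X)h(X)) where a(X) and b(X) range over all polynomials in F_p[X]. -/
open Polynomial

/-- The right cyclic shift `N` on `F_p^n`. -/
def shiftN {p n : ℕ} [NeZero n] (u : Fin n → ZMod p) : Fin n → ZMod p :=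
  fun i => u (i - 1)

/-- The polynomial `u(X) = u_0 + u_1 X + … + u_{n−1} X^{n−1}` associated with a
vector `u ∈ F_p^n`. -/
noncomputable def vecPoly {p n : ℕ} (u : Fin n → ZMod p) : Polynomial (ZMod p) :=
  ∑ i : Fin n, Polynomial.monomial (i : ℕ) (u i)

/-- The image of the vector `u ∈ F_p^n` in the ring `R = F_p[X]/(X^n − 1)`. -/
noncomputable def toR (p n : ℕ) (u : Fin n → ZMod p) :
    Polynomial (ZMod p) ⧸ Ideal.span {(X : Polynomial (ZMod p)) ^ n - 1} :=
  Ideal.Quotient.mk _ (vecPoly u)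

theorem toR_add' {p n : ℕ} (u v : Fin n → ZMod p) :
    toR p n (u + v) = toR p n u + toR p n v := by
  simp [toR, vecPoly, Finset.sum_add_distrib]

theorem toR_zero' {p n : ℕ} : toR p n 0 = 0 := by
  simp [toR, vecPoly]

theorem toR_smul' {p n : ℕ} (c : ZMod p) (u : Fin n → ZMod p) :
    toR p n (c • u) = Ideal.Quotient.mk _ (C c) * toR p n u := by
  rw [toR, toR, ← map_mul]
  congr 1
  simp [vecPoly, Finset.mul_sum, C_mul_monomial]

theorem X_pow_quot (p n : ℕ) :
    (Ideal.Quotient.mk (Ideal.span {(X : Polynomial (ZMod p)) ^ n - 1}) X) ^ n = 1 := by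
  rw [← map_pow, ← map_one (Ideal.Quotient.mk _), Ideal.Quotient.eq]
  exact Ideal.mem_span_singleton_self _

theorem toR_eq_sum {p n : ℕ} (u : Fin n → ZMod p) :
    toR p n u = ∑ i : Fin n, Ideal.Quotient.mk _ (C (u i)) * (Ideal.Quotient.mk _ X) ^ (i : ℕ) := by
  simp only [toR, vecPoly, map_sum, ← C_mul_X_pow_eq_monomial, map_mul, map_pow]

theorem toR_shift {p n : ℕ} [NeZero n] (u : Fin n → ZMod p) :
    toR p n (shiftN u) = Ideal.Quotient.mk _ X * toR p n u := by
  rw [toR_eq_sum, toR_eq_sum, Finset.mul_sum, ← Equiv.sum_comp (Equiv.addRight (1 : Fin n))]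
  refine Finset.sum_congr rfl fun i _ => ?_
  have h : (Ideal.Quotient.mk (Ideal.span {(X : Polynomial (ZMod p)) ^ n - 1}) X) ^
      ((i + 1 : Fin n) : ℕ) = (Ideal.Quotient.mk _ X) ^ ((i : ℕ) + 1) := by
    rw [Fin.val_add, ← pow_eq_pow_mod _ (X_pow_quot p n), pow_add, pow_add, Fin.val_one',
      ← pow_eq_pow_mod _ (X_pow_quot p n)]
  simp only [Equiv.coe_addRight, shiftN, add_sub_cancel_right, h]
  ring

theorem toR_inj {p n : ℕ} [Fact p.Prime] [NeZero n] {u v : Fin n → ZMod p}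
    (h : toR p n u = toR p n v) : u = v := by
  have hd : ∀ w : Fin n → ZMod p, (vecPoly w).degree < (n : ℕ) := by
    intro w
    refine (degree_sum_le _ _).trans_lt ?_
    refine (Finset.sup_lt_iff (WithBot.bot_lt_coe n)).2 ?_
    intro i _
    refine (degree_monomial_le _ _).trans_lt ?_
    exact WithBot.coe_lt_coe.2 i.2
  have hc : ∀ (w : Fin n → ZMod p) (i : Fin n), (vecPoly w).coeff i = w i := by
    intro w i
    simp [vecPoly, coeff_monomial, Fin.val_inj]
  rw [toR, toR, Ideal.Quotient.eq, Ideal.mem_span_singleton] at h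
  have h0 : vecPoly u - vecPoly v = 0 := by
    refine eq_zero_of_dvd_of_degree_lt h ?_
    have : ((X : Polynomial (ZMod p)) ^ n - 1).degree = n := by
      simpa using degree_X_pow_sub_C (Nat.pos_of_ne_zero (NeZero.ne n)) (1 : ZMod p)
    rw [this]
    exact (degree_sub_le _ _).trans_lt (max_lt (hd u) (hd v))
  funext i
  rw [← hc u, ← hc v, sub_eq_zero.mp h0]

/-- Let `p` be a prime and `n` a positive integer coprime to `p`.
A linear subspace `S ⊆ F_p^n × F_p^n` is separately cyclic iff there exist
polynomials `g, f, h ∈ F_p[X]` with `g ∣ X^n − 1` and `h ∣ X^n − 1` such that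
the elements of `S`, viewed in `R × R` for `R = F_p[X]/(X^n−1)`, are exactly the
pairs `(a g, a f + b h)` where `a, b` range over `F_p[X]`. -/
theorem stmt_3 (p n : ℕ) [Fact p.Prime] [NeZero n] (hco : Nat.Coprime n p)
    (S : Submodule (ZMod p) ((Fin n → ZMod p) × (Fin n → ZMod p))) :
    (∀ ab : (Fin n → ZMod p) × (Fin n → ZMod p), ab ∈ S →
        (shiftN ab.1, shiftN ab.2) ∈ S) ↔
      ∃ g f h : Polynomial (ZMod p),
        g ∣ X ^ n - 1 ∧ h ∣ X ^ n - 1 ∧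
        ∀ ab : (Fin n → ZMod p) × (Fin n → ZMod p),
          ab ∈ S ↔ ∃ a b : Polynomial (ZMod p),
            toR p n ab.1 = Ideal.Quotient.mk _ (a * g) ∧
            toR p n ab.2 = Ideal.Quotient.mk _ (a * f + b * h) := by
  constructor
  · intro hS
    let T : Polynomial (ZMod p) → Polynomial (ZMod p) → Prop := fun P Q =>
      ∃ ab ∈ S, toR p n ab.1 = Ideal.Quotient.mk _ P ∧ toR p n ab.2 = Ideal.Quotient.mk _ Q
    have Tadd : ∀ {P Q P' Q'}, T P Q → T P' Q' → T (P + P') (Q + Q') := by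
      rintro P Q P' Q' ⟨s, hs, h1, h2⟩ ⟨t, ht, h3, h4⟩
      refine ⟨s + t, S.add_mem hs ht, ?_, ?_⟩
      · rw [Prod.fst_add, toR_add', h1, h3, map_add]
      · rw [Prod.snd_add, toR_add', h2, h4, map_add]
    have T0 : T 0 0 := ⟨0, S.zero_mem, by simp [toR_zero'], by simp [toR_zero']⟩
    have TC : ∀ {P Q} (c : ZMod p), T P Q → T (C c * P) (C c * Q) := by
      rintro P Q c ⟨s, hs, h1, h2⟩
      refine ⟨c • s, S.smul_mem c hs, ?_, ?_⟩
      · rw [Prod.smul_fst, toR_smul', h1, map_mul]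
      · rw [Prod.smul_snd, toR_smul', h2, map_mul]
    have TX : ∀ {P Q}, T P Q → T (X * P) (X * Q) := by
      rintro P Q ⟨s, hs, h1, h2⟩
      refine ⟨_, hS s hs, ?_, ?_⟩
      · rw [toR_shift, h1, map_mul]
      · rw [toR_shift, h2, map_mul]
    have Tmul : ∀ (a : Polynomial (ZMod p)) {P Q}, T P Q → T (a * P) (a * Q) := by
      intro a P Q h
      induction a using Polynomial.induction_on with
      | C c => exact TC c h
      | add a b ha hb => rw [add_mul, add_mul]; exact Tadd ha hb
      | monomial k c ih =>
        have := TX ih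
        have e : ∀ Z : Polynomial (ZMod p), C c * X ^ (k + 1) * Z = X * (C c * X ^ k * Z) := by
          intro Z; ring
        rw [e, e]; exact this
    have hN : Ideal.Quotient.mk (Ideal.span {(X : Polynomial (ZMod p)) ^ n - 1}) (X ^ n - 1) = 0 :=
      Ideal.Quotient.eq_zero_iff_mem.mpr (Ideal.mem_span_singleton_self _)
    let I1 : Ideal (Polynomial (ZMod p)) :=
      { carrier := {P | ∃ Q, T P Q}
        add_mem' := by rintro a b ⟨Q, h⟩ ⟨Q', h'⟩; exact ⟨_, Tadd h h'⟩
        zero_mem' := ⟨0, T0⟩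
        smul_mem' := by rintro c x ⟨Q, h⟩; exact ⟨_, Tmul c h⟩ }
    let I2 : Ideal (Polynomial (ZMod p)) :=
      { carrier := {Q | T 0 Q}
        add_mem' := by
          intro a b h h'
          have := Tadd h h'
          rwa [add_zero] at this
        zero_mem' := T0
        smul_mem' := by
          intro c x h
          have := Tmul c h
          rwa [mul_zero] at this }
    obtain ⟨g, hg⟩ := (IsPrincipalIdealRing.principal I1).principal
    obtain ⟨h, hh⟩ := (IsPrincipalIdealRing.principal I2).principal
    have m1 : ∀ P, (∃ Q, T P Q) ↔ g ∣ P := by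
      intro P
      rw [← Ideal.mem_span_singleton]
      change P ∈ I1 ↔ P ∈ Submodule.span _ {g}
      rw [hg]
    have m2 : ∀ Q, T 0 Q ↔ h ∣ Q := by
      intro P
      rw [← Ideal.mem_span_singleton]
      change P ∈ I2 ↔ P ∈ Submodule.span _ {h}
      rw [hh]
    obtain ⟨f, hf⟩ := (m1 g).2 dvd_rfl
    refine ⟨g, f, h, (m1 _).1 ⟨0, 0, S.zero_mem, ?_, ?_⟩, (m2 _).1 ⟨0, S.zero_mem, ?_, ?_⟩, ?_⟩
    · rw [hN]; exact toR_zero'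
    · rw [map_zero]; exact toR_zero'
    · rw [map_zero]; exact toR_zero'
    · rw [hN]; exact toR_zero'
    intro ab
    constructor
    · intro hab
      have hT : T (vecPoly ab.1) (vecPoly ab.2) := ⟨ab, hab, rfl, rfl⟩
      obtain ⟨a, ha⟩ := (m1 _).1 ⟨_, hT⟩
      have h3 := Tadd hT (Tmul (-a) hf)
      have e : vecPoly ab.1 + -a * g = 0 := by rw [ha]; ring
      rw [e] at h3
      obtain ⟨b, hb⟩ := (m2 _).1 h3
      refine ⟨a, b, ?_, ?_⟩
      · rw [toR, ha, mul_comm]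
      · rw [toR]; congr 1; linear_combination hb
    · rintro ⟨a, b, h1, h2⟩
      have h3 := Tadd (Tmul a hf) (Tmul b ((m2 h).2 dvd_rfl))
      rw [mul_zero, add_zero] at h3
      obtain ⟨s, hs, h4, h5⟩ := h3
      have : ab = s := Prod.ext (toR_inj (h1.trans h4.symm)) (toR_inj (h2.trans h5.symm))
      rwa [this]
  · rintro ⟨g, f, h, -, -, H⟩ ab hab
    obtain ⟨a, b, h1, h2⟩ := (H ab).1 hab
    refine (H _).2 ⟨X * a, X * b, ?_, ?_⟩
    · rw [toR_shift, h1, ← map_mul, mul_assoc]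
    · rw [toR_shift, h2, ← map_mul]; congr 1; ring
end

section
/- Let p be a prime, n a positive integer, and S a separately cyclic linear subspace of F_p^n × F_p^n. An element (u,v) of F_p^n × F_p^n has zero symplectic inner product with every element of S if and only if for every (a,b) ∈ S the identity a(X)v(X^{−1}) = b(X)u(X^{−1}) holds in R = F_p[X]/(X^n−1), i.e., (a,b) and (u,v) are isotropic pairs of polynomials modulo X^n − 1. -/
open Polynomial

/-- The symplectic inner product of `(a,b)` and `(c,d)`, namely `aᵀd − bᵀc`. -/
def sympInner {p n : ℕ} (u v : (Fin n → ZMod p) × (Fin n → ZMod p)) : ZMod p :=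
  (∑ i, u.1 i * v.2 i) - (∑ i, u.2 i * v.1 i)

/-- The canonical projection `F_p[X] → R = F_p[X]/(X^n − 1)`. -/
noncomputable def mkR (p n : ℕ) (q : Polynomial (ZMod p)) :
    Polynomial (ZMod p) ⧸ Ideal.span {(X : Polynomial (ZMod p)) ^ n - 1} :=
  Ideal.Quotient.mk _ q

section helpers

theorem hlp_shift {p n : ℕ} [NeZero n]
    (S : Submodule (ZMod p) ((Fin n → ZMod p) × (Fin n → ZMod p)))
    (hcyc : ∀ ab ∈ S, (shiftN ab.1, shiftN ab.2) ∈ S)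
    (ab : (Fin n → ZMod p) × (Fin n → ZMod p)) (hab : ab ∈ S) (k : Fin n) :
    ((fun i => ab.1 (i + k)), (fun i => ab.2 (i + k))) ∈ S := by
  have h : ∀ m : ℕ, ((fun i => ab.1 (i - Fin.ofNat n m)),
      (fun i => ab.2 (i - Fin.ofNat n m))) ∈ S := by
    intro m
    induction m with
    | zero => simpa using hab
    | succ m ih =>
      have h1 := hcyc _ ih
      have h2 : ∀ i : Fin n, i - Fin.ofNat n (m + 1) = i - 1 - Fin.ofNat n m := by
        intro i
        have h3 : Fin.ofNat n (m + 1) = 1 + Fin.ofNat n m := by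
          apply Fin.ext
          simp [Fin.val_add, add_comm]
        rw [h3, sub_sub]
      simp only [h2]
      exact h1
  have h4 := h (-k).val
  simpa using h4

theorem hlp_pow {M : Type*} [Monoid M] {n : ℕ} [NeZero n] (x : M) (hx : x ^ n = 1)
    (i j : Fin n) : x ^ (i : ℕ) * (x ^ (n - 1)) ^ (j : ℕ) = x ^ ((i - j : Fin n) : ℕ) := by
  have hn : 0 < n := Nat.pos_of_ne_zero (NeZero.ne n)
  rw [← pow_mul, ← pow_add, Fin.val_sub, ← pow_eq_pow_mod _ hx]
  have e : (i : ℕ) + (n - 1) * j + n = (n - j + i) + n * j := by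
    obtain ⟨m, rfl⟩ : ∃ m, n = m + 1 := ⟨n - 1, by omega⟩
    have := j.isLt
    simp only [Nat.add_sub_cancel, add_mul]
    omega
  have e2 := congrArg (fun t => x ^ t) e
  simpa only [pow_add x _ n, pow_add x _ (n * _), pow_mul, hx, one_pow, mul_one] using e2

theorem hlp_mk {p n : ℕ} [NeZero n] (a v : Fin n → ZMod p) :
    mkR p n (vecPoly a * (vecPoly v).comp (X ^ (n - 1))) =
      mkR p n (vecPoly (fun k => ∑ j, a (j + k) * v j)) := by
  have hx : (Ideal.Quotient.mk (Ideal.span {(X : Polynomial (ZMod p)) ^ n - 1}) X) ^ n = 1 := by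
    rw [← map_pow, ← map_one (Ideal.Quotient.mk _), Ideal.Quotient.eq]
    exact Ideal.subset_span rfl
  unfold mkR vecPoly
  simp only [← C_mul_X_pow_eq_monomial, Polynomial.sum_comp, mul_comp, C_comp, pow_comp,
    X_comp, map_mul, map_sum, map_pow, Finset.sum_mul, Finset.mul_sum]
  conv_rhs => rw [Finset.sum_comm]
  refine Finset.sum_congr rfl fun j _ => ?_
  rw [← Equiv.sum_comp (Equiv.addLeft j)]
  refine Finset.sum_congr rfl fun k _ => ?_
  have h := hlp_pow _ hx (j + k) j
  rw [add_sub_cancel_left] at h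
  simp only [Equiv.coe_addLeft]
  rw [← h]
  ring

theorem hlp_coeff {p n : ℕ} (a : Fin n → ZMod p) (k : Fin n) :
    (vecPoly a).coeff k = a k := by
  simp [vecPoly, Polynomial.coeff_monomial, Fin.val_inj]

theorem hlp_deg {p n : ℕ} (a : Fin n → ZMod p) : (vecPoly a).degree < n := by
  unfold vecPoly
  refine (Polynomial.degree_sum_le _ _).trans_lt ?_
  refine (Finset.sup_lt_iff (WithBot.bot_lt_coe n)).2 ?_
  intro i _
  exact (degree_monomial_le _ _).trans_lt (WithBot.coe_lt_coe.2 i.isLt)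

theorem hlp_inj {p n : ℕ} [Fact p.Prime] [NeZero n] (a b : Fin n → ZMod p) :
    mkR p n (vecPoly a) = mkR p n (vecPoly b) ↔ a = b := by
  refine ⟨fun h => ?_, fun h => by rw [h]⟩
  unfold mkR at h
  rw [Ideal.Quotient.eq, Ideal.mem_span_singleton] at h
  have h0 : vecPoly a - vecPoly b = 0 := by
    refine Polynomial.eq_zero_of_dvd_of_degree_lt h ?_
    have : ((X : Polynomial (ZMod p)) ^ n - 1).degree = n := by
      simpa using degree_X_pow_sub_C (Nat.pos_of_ne_zero (NeZero.ne n)) (1 : ZMod p)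
    rw [this]
    exact (degree_sub_le _ _).trans_lt (max_lt (hlp_deg a) (hlp_deg b))
  funext k
  rw [← hlp_coeff a, ← hlp_coeff b, sub_eq_zero.mp h0]

end helpers

/-- Let `S` be a separately cyclic linear subspace of
`F_p^n × F_p^n`.  A pair `(u,v)` has zero symplectic inner product with every
element of `S` iff for every `(a,b) ∈ S` the identity
`a(X)·v(X^{−1}) = b(X)·u(X^{−1})` holds in `R = F_p[X]/(X^n−1)`
(`X^{−1}` being the class of `X^{n−1}`). -/
theorem stmt_5 (p n : ℕ) [Fact p.Prime] [NeZero n]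
    (S : Submodule (ZMod p) ((Fin n → ZMod p) × (Fin n → ZMod p)))
    (hcyc : ∀ ab ∈ S, (shiftN ab.1, shiftN ab.2) ∈ S)
    (u v : Fin n → ZMod p) :
    (∀ ab ∈ S, sympInner (u, v) ab = 0) ↔
      ∀ ab ∈ S,
        mkR p n (vecPoly ab.1 * (vecPoly v).comp (X ^ (n - 1))) =
          mkR p n (vecPoly ab.2 * (vecPoly u).comp (X ^ (n - 1))) := by
  simp only [hlp_mk, hlp_inj]
  constructor
  · intro h ab hab
    funext k
    have h1 := h _ (hlp_shift S hcyc ab hab k)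
    simp only [sympInner, sub_eq_zero] at h1
    simp only [mul_comm _ (v _), mul_comm _ (u _)]
    exact h1.symm
  · intro h ab hab
    have h1 := congrFun (h ab hab) 0
    simp only [add_zero] at h1
    simp only [sympInner, sub_eq_zero]
    simp only [mul_comm _ (v _), mul_comm _ (u _)] at h1
    exact h1.symm
end

section
/- Let p be a prime, n a positive integer, and S a separately cyclic linear subspace of F_p^n × F_p^n. Then S is totally isotropic with respect to the symplectic inner product if and only if for every two elements (a,b) and (c,d) of S the identity a(X)d(X^{−1}) = b(X)c(X^{−1}) holds in R = F_p[X]/(X^n−1). -/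
open Polynomial

open Polynomial

lemma mkR_X_pow_n (p n : ℕ) : (mkR p n X) ^ n = 1 := by
  have : Ideal.Quotient.mk (Ideal.span {(X : Polynomial (ZMod p)) ^ n - 1}) (X ^ n - 1) = 0 :=
    Ideal.Quotient.eq_zero_iff_mem.2 (Ideal.subset_span rfl)
  rw [map_sub, map_pow, map_one, sub_eq_zero] at this
  exact this

lemma mkR_X_pow_sub (p n : ℕ) [NeZero n] (i j : Fin n) :
    (mkR p n X) ^ (i : ℕ) * ((mkR p n X) ^ (n - 1)) ^ (j : ℕ) =
      (mkR p n X) ^ ((i - j : Fin n) : ℕ) := by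
  have hn : 0 < n := Nat.pos_of_ne_zero (NeZero.ne n)
  have h := mkR_X_pow_n p n
  rw [← pow_mul, ← pow_add]
  rw [pow_eq_pow_mod _ h, Fin.sub_def]
  congr 1
  change _ % n = (n - (j : ℕ) + i) % n
  have hj := j.2
  have : (i : ℕ) + (n - 1) * j ≡ n - (j : ℕ) + i [MOD n] := by
    rw [← ZMod.natCast_eq_natCast_iff]
    push_cast [Nat.cast_sub hj.le, Nat.cast_sub (show 1 ≤ n from hn)]
    simp
    ring
  exact this

/-- cyclic correlation -/
def corr {p n : ℕ} [NeZero n] (a d : Fin n → ZMod p) : Fin n → ZMod p :=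
  fun k => ∑ i, a i * d (i - k)

lemma mkR_corr (p n : ℕ) [NeZero n] (a d : Fin n → ZMod p) :
    mkR p n (vecPoly a * (vecPoly d).comp (X ^ (n - 1))) = mkR p n (vecPoly (corr a d)) := by
  have h := mkR_X_pow_sub p n
  unfold mkR at *
  simp only [vecPoly, corr, map_mul, map_sum, map_pow, ← C_mul_X_pow_eq_monomial,
    Polynomial.sum_comp, mul_comp, C_comp, X_pow_comp, Finset.sum_mul, Finset.mul_sum]
  conv_lhs => rw [Finset.sum_comm]
  conv_rhs => rw [Finset.sum_comm]
  refine Finset.sum_congr rfl fun i _ => ?_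
  refine Fintype.sum_equiv (Equiv.subLeft i) _ _ fun j => ?_
  simp only [Equiv.subLeft_apply, sub_sub_cancel]
  rw [← h]
  ring

lemma vecPoly_coeff {p n : ℕ} (u : Fin n → ZMod p) (k : Fin n) :
    (vecPoly u).coeff k = u k := by
  simp [vecPoly, finsetSum_coeff, coeff_monomial, Fin.val_inj]

lemma mkR_inj (p n : ℕ) [Fact p.Prime] [NeZero n] {u v : Fin n → ZMod p}
    (h : mkR p n (vecPoly u) = mkR p n (vecPoly v)) : u = v := by
  have hn : 0 < n := Nat.pos_of_ne_zero (NeZero.ne n)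
  have hd : ∀ w : Fin n → ZMod p, (vecPoly w).degree < n := fun w => by
    refine (degree_sum_le _ _).trans_lt ((Finset.sup_lt_iff (WithBot.bot_lt_coe n)).2 fun i _ => ?_)
    exact (degree_monomial_le _ _).trans_lt (Nat.cast_lt.2 i.2)
  have h1 : (X : Polynomial (ZMod p)) ^ n - 1 ∣ vecPoly u - vecPoly v :=
    Ideal.mem_span_singleton.1 (Ideal.Quotient.eq.1 h)
  have h2 : vecPoly u - vecPoly v = 0 := by
    refine eq_zero_of_dvd_of_degree_lt h1 ?_
    rw [← C_1, degree_X_pow_sub_C hn]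
    exact (degree_sub_le _ _).trans_lt (max_lt (hd u) (hd v))
  funext k
  rw [← vecPoly_coeff u, ← vecPoly_coeff v, sub_eq_zero.1 h2]

lemma shift_mem (p n : ℕ) [NeZero n]
    (S : Submodule (ZMod p) ((Fin n → ZMod p) × (Fin n → ZMod p)))
    (hcyc : ∀ ab ∈ S, (shiftN ab.1, shiftN ab.2) ∈ S) (cd) (hcd : cd ∈ S) (m : ℕ) :
    ∀ k : Fin n, (k : ℕ) = m → ((fun i => cd.1 (i - k), fun i => cd.2 (i - k)) :
      (Fin n → ZMod p) × (Fin n → ZMod p)) ∈ S := by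
  induction m with
  | zero =>
    intro k hk
    obtain rfl : k = 0 := Fin.ext (by simpa using hk)
    simpa using hcd
  | succ m ih =>
    intro k hk
    have hm : m < n := by have := k.2; omega
    have hk' : k = ⟨m, hm⟩ + 1 := by
      apply Fin.ext
      have := k.2
      rw [Fin.val_add, Fin.val_one', Nat.add_mod_mod, hk]
      exact (Nat.mod_eq_of_lt (by omega)).symm
    have := hcyc _ (ih ⟨m, hm⟩ rfl)
    rw [hk']
    have e : ∀ i : Fin n, i - (⟨m, hm⟩ + 1) = i - 1 - ⟨m, hm⟩ := fun i => by
      rw [sub_sub, add_comm]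
    simp only [e]
    exact this

/-- A separately cyclic linear subspace `S` of `F_p^n × F_p^n` is
totally isotropic with respect to the symplectic inner product iff for all
`(a,b), (c,d) ∈ S` the identity `a(X)·d(X^{−1}) = b(X)·c(X^{−1})` holds in
`R = F_p[X]/(X^n−1)` (`X^{−1}` being the class of `X^{n−1}`). -/
theorem stmt_6 (p n : ℕ) [Fact p.Prime] [NeZero n]
    (S : Submodule (ZMod p) ((Fin n → ZMod p) × (Fin n → ZMod p)))
    (hcyc : ∀ ab ∈ S, (shiftN ab.1, shiftN ab.2) ∈ S) :
    (∀ ab ∈ S, ∀ cd ∈ S, sympInner ab cd = 0) ↔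
      ∀ ab ∈ S, ∀ cd ∈ S,
        mkR p n (vecPoly ab.1 * (vecPoly cd.2).comp (X ^ (n - 1))) =
          mkR p n (vecPoly ab.2 * (vecPoly cd.1).comp (X ^ (n - 1))) := by
  have key : ∀ ab cd : (Fin n → ZMod p) × (Fin n → ZMod p), ∀ k : Fin n,
      sympInner ab (fun i => cd.1 (i - k), fun i => cd.2 (i - k)) =
        corr ab.1 cd.2 k - corr ab.2 cd.1 k := fun _ _ _ => rfl
  simp only [mkR_corr]
  constructor
  · intro h ab hab cd hcd
    congr 2
    funext k
    rw [← sub_eq_zero, ← key]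
    exact h ab hab _ (shift_mem p n S hcyc cd hcd k k rfl)
  · intro h ab hab cd hcd
    have h1 := key ab cd 0
    rw [mkR_inj p n (h ab hab cd hcd), sub_self] at h1
    simpa using h1
end

section
/- Let p be a prime and n a positive integer coprime to p. A linear subspace S of F_p^n × F_p^n is totally isotropic and separately cyclic if and only if there exist polynomials g, f, h in F_p[X] such that: (1) g and h divide X^n − 1 in F_p[X]; (2) g(X^{−1})h(X) = g(X)h(X^{−1}) = 0 in R = F_p[X]/(X^n−1); (3) g(X)f(X^{−1}) = f(X)g(X^{−1}) in R; and (4) S, viewed in R × R, is exactly the set of pairs (a(X)g(X), a(X)f(X) + b(X)h(X)) where a and b range over all polynomials in F_p[X]. -/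
open Polynomial

namespace Stmt7

abbrev RR (p n : ℕ) := Polynomial (ZMod p) ⧸ Ideal.span {(X : Polynomial (ZMod p)) ^ n - 1}

noncomputable def mk (p n : ℕ) : Polynomial (ZMod p) →+* RR p n := Ideal.Quotient.mk _

theorem mkR_eq (p n : ℕ) (q : Polynomial (ZMod p)) : mkR p n q = mk p n q := rfl

theorem mk_eq_zero (p n : ℕ) (q : Polynomial (ZMod p)) :
    mk p n q = 0 ↔ (X : Polynomial (ZMod p)) ^ n - 1 ∣ q := by
  unfold mk
  rw [Ideal.Quotient.eq_zero_iff_mem, Ideal.mem_span_singleton]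

theorem x_pow (p n : ℕ) : (mk p n X) ^ n = 1 := by
  have : mk p n (X ^ n - 1) = 0 := (mk_eq_zero p n _).2 dvd_rfl
  rw [map_sub, map_pow, map_one] at this
  exact sub_eq_zero.1 this

theorem x_pow_mod (p n k : ℕ) : (mk p n X) ^ k = (mk p n X) ^ (k % n) := by
  conv_lhs => rw [← Nat.div_add_mod k n, pow_add, pow_mul, x_pow, one_pow, one_mul]

noncomputable def star (p n : ℕ) : RR p n →+* RR p n :=
  Ideal.Quotient.lift _ ((mk p n).comp (Polynomial.compRingHom (X ^ (n - 1)))) (by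
    intro a ha
    rw [Ideal.mem_span_singleton] at ha
    obtain ⟨c, rfl⟩ := ha
    rw [map_mul]
    have : ((mk p n).comp (Polynomial.compRingHom (X ^ (n - 1)))) (X ^ n - 1) = 0 := by
      simp only [RingHom.comp_apply, map_sub, map_pow, map_one, Polynomial.coe_compRingHom_apply,
        X_comp]
      rw [← pow_mul, mul_comm, pow_mul, x_pow, one_pow, sub_self]
    rw [this, zero_mul])

theorem star_mk (p n : ℕ) (q : Polynomial (ZMod p)) :
    star p n (mk p n q) = mk p n (q.comp (X ^ (n - 1))) := rfl

noncomputable def phi (p n : ℕ) (u : Fin n → ZMod p) : RR p n := mk p n (vecPoly u)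

theorem vecPoly_add {p n : ℕ} (u v : Fin n → ZMod p) :
    vecPoly (u + v) = vecPoly u + vecPoly v := by
  simp [vecPoly, Finset.sum_add_distrib]

theorem vecPoly_smul {p n : ℕ} (c : ZMod p) (u : Fin n → ZMod p) :
    vecPoly (c • u) = C c * vecPoly u := by
  simp [vecPoly, Finset.mul_sum, C_mul_monomial]

theorem vecPoly_sub {p n : ℕ} (u v : Fin n → ZMod p) :
    vecPoly (u - v) = vecPoly u - vecPoly v := by
  simp [vecPoly, Finset.sum_sub_distrib]

theorem phi_add {p n : ℕ} (u v : Fin n → ZMod p) : phi p n (u + v) = phi p n u + phi p n v := by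
  simp [phi, vecPoly_add]

theorem phi_sub {p n : ℕ} (u v : Fin n → ZMod p) : phi p n (u - v) = phi p n u - phi p n v := by
  simp [phi, vecPoly_sub]

theorem phi_smul {p n : ℕ} (c : ZMod p) (u : Fin n → ZMod p) :
    phi p n (c • u) = mk p n (C c) * phi p n u := by
  simp [phi, vecPoly_smul]

theorem phi_zero {p n : ℕ} : phi p n 0 = 0 := by
  simp [phi, vecPoly]

theorem phi_eq {p n : ℕ} (u : Fin n → ZMod p) :
    phi p n u = ∑ i : Fin n, mk p n (C (u i)) * (mk p n X) ^ (i : ℕ) := by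
  simp only [phi, vecPoly, map_sum]
  refine Finset.sum_congr rfl fun i _ => ?_
  rw [← C_mul_X_pow_eq_monomial, map_mul, map_pow]

theorem vecPoly_coeff {p n : ℕ} (u : Fin n → ZMod p) (i : Fin n) :
    (vecPoly u).coeff i = u i := by
  simp only [vecPoly, finsetSum_coeff, coeff_monomial]
  rw [Finset.sum_eq_single i]
  · simp
  · intro b _ hb
    rw [if_neg]
    intro h
    exact hb (Fin.ext h)
  · simp

theorem vecPoly_degree {p n : ℕ} (u : Fin n → ZMod p) : (vecPoly u).degree < n := by
  unfold vecPoly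
  refine (Finset.sup_lt_iff (WithBot.bot_lt_coe n)).2 ?_ |> lt_of_le_of_lt (degree_sum_le _ _)
  intro i _
  exact lt_of_le_of_lt (degree_monomial_le _ _) (WithBot.coe_lt_coe.2 (Nat.cast_lt.2 i.2))

theorem phi_inj {p n : ℕ} [Fact p.Prime] [NeZero n] {u : Fin n → ZMod p}
    (h : phi p n u = 0) : u = 0 := by
  have h2 := (mk_eq_zero p n _).1 h
  have h3 : vecPoly u = 0 := by
    refine eq_zero_of_dvd_of_degree_lt h2 ?_
    rw [← C_1, degree_X_pow_sub_C (NeZero.pos n)]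
    exact vecPoly_degree u
  ext i
  rw [← vecPoly_coeff u i, h3]; simp

theorem phi_surj {p n : ℕ} [Fact p.Prime] [NeZero n] (q : Polynomial (ZMod p)) :
    ∃ u, phi p n u = mk p n q := by
  have hm : ((X : Polynomial (ZMod p)) ^ n - 1).Monic := by
    rw [← C_1]; exact monic_X_pow_sub_C _ (NeZero.ne n)
  refine ⟨fun i => (q %ₘ (X ^ n - 1)).coeff i, ?_⟩
  have h1 : vecPoly (fun i : Fin n => (q %ₘ (X ^ n - 1)).coeff i) = q %ₘ (X ^ n - 1) := by
    have hd : (q %ₘ (X ^ n - 1)).natDegree < n := by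
      have := natDegree_modByMonic_lt q hm (by
        intro h
        have := congrArg natDegree h
        rw [← C_1, natDegree_X_pow_sub_C] at this
        simp at this
        exact NeZero.ne n this)
      rwa [← C_1, natDegree_X_pow_sub_C] at this
    conv_rhs => rw [as_sum_range' _ n hd]
    rw [vecPoly, ← Fin.sum_univ_eq_sum_range
      (fun i => monomial i ((q %ₘ (X ^ n - 1)).coeff i)) n]
  rw [phi, h1]
  have h2 := modByMonic_add_div q ((X : Polynomial (ZMod p)) ^ n - 1)
  conv_rhs => rw [← h2]
  rw [map_add, map_mul, (mk_eq_zero p n _).2 dvd_rfl, zero_mul, add_zero]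

theorem phi_shift {p n : ℕ} [NeZero n] (u : Fin n → ZMod p) :
    phi p n (shiftN u) = mk p n X * phi p n u := by
  rw [phi_eq, phi_eq, Finset.mul_sum, ← Equiv.sum_comp (Equiv.addRight (1 : Fin n))]
  refine Finset.sum_congr rfl fun i _ => ?_
  have : (mk p n X) ^ ((i + 1 : Fin n) : ℕ) = mk p n X ^ ((i : ℕ) + 1) := by
    rw [x_pow_mod p n (i + 1), Fin.val_add, Fin.val_one', Nat.add_mod_mod]
  simp only [Equiv.coe_addRight, shiftN, add_sub_cancel_right, this]
  ring

theorem phi_mul_star {p n : ℕ} [NeZero n] (u v : Fin n → ZMod p) :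
    phi p n u * star p n (phi p n v) = phi p n (fun k => ∑ i, u i * v (i - k)) := by
  have hs : star p n (phi p n v) =
      ∑ j : Fin n, mk p n (C (v j)) * (mk p n X) ^ ((n - 1) * (j : ℕ)) := by
    rw [phi_eq, map_sum]
    refine Finset.sum_congr rfl fun i _ => ?_
    rw [map_mul, map_pow, star_mk, star_mk, C_comp, X_comp, map_pow, pow_mul]
  rw [hs, phi_eq, phi_eq, Finset.sum_mul]
  simp only [map_sum, Finset.sum_mul]
  rw [Finset.sum_comm]
  rw [Finset.sum_comm]
  rw [Finset.sum_comm (s := Finset.univ) (f := fun k i => mk p n (C (u i * v (i - k))) * _)]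
  refine Finset.sum_congr rfl fun i _ => ?_
  rw [Finset.mul_sum, ← Equiv.sum_comp (Equiv.subLeft i)]
  refine Finset.sum_congr rfl fun k _ => ?_
  have : (mk p n X) ^ (i : ℕ) * (mk p n X) ^ ((n - 1) * ((i - k : Fin n) : ℕ))
      = (mk p n X) ^ (k : ℕ) := by
    have h1 : (mk p n X) ^ (i : ℕ) =
        (mk p n X) ^ ((k : ℕ) + ((i - k : Fin n) : ℕ)) := by
      conv_rhs => rw [x_pow_mod]
      rw [← Fin.val_add, add_sub_cancel]
    rw [h1, ← pow_add]
    have h2 : (k : ℕ) + ((i - k : Fin n) : ℕ) + (n - 1) * ((i - k : Fin n) : ℕ)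
        = k + n * ((i - k : Fin n) : ℕ) := by
      obtain ⟨m, hm⟩ : ∃ m, n = m + 1 := ⟨n - 1, (Nat.succ_pred (NeZero.ne n)).symm⟩
      generalize ((i - k : Fin n) : ℕ) = t
      rw [show n - 1 = m by omega]
      nth_rewrite 3 [hm]
      ring
    rw [h2, pow_add, pow_mul, x_pow, one_pow, mul_one]
  simp only [Equiv.subLeft_apply, C_mul, map_mul]
  rw [← this]
  ring

/-- The `R`-valued form. -/
theorem form_eq {p n : ℕ} [NeZero n] (ab cd : (Fin n → ZMod p) × (Fin n → ZMod p)) :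
    phi p n ab.1 * star p n (phi p n cd.2) - phi p n ab.2 * star p n (phi p n cd.1) =
      phi p n (fun k => sympInner ab (fun i => cd.1 (i - k), fun i => cd.2 (i - k))) := by
  rw [phi_mul_star, phi_mul_star, ← phi_sub]
  rfl

end Stmt7

open Stmt7

/-- Let `p` be a prime and `n` a positive integer coprime to `p`.
A linear subspace `S ⊆ F_p^n × F_p^n` is totally isotropic and separately cyclic
iff there exist `g, f, h ∈ F_p[X]` such that (1) `g ∣ X^n − 1` and `h ∣ X^n − 1`;
(2) `g(X^{−1})h(X) = g(X)h(X^{−1}) = 0` in `R = F_p[X]/(X^n−1)`;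
(3) `g(X)f(X^{−1}) = f(X)g(X^{−1})` in `R`; and (4) `S`, viewed in `R × R`, is
exactly the set of pairs `(a g, a f + b h)` with `a, b` ranging over `F_p[X]`. -/
theorem stmt_7 (p n : ℕ) [Fact p.Prime] [NeZero n] (hco : Nat.Coprime n p)
    (S : Submodule (ZMod p) ((Fin n → ZMod p) × (Fin n → ZMod p))) :
    ((∀ ab ∈ S, ∀ cd ∈ S, sympInner ab cd = 0) ∧
        (∀ ab ∈ S, (shiftN ab.1, shiftN ab.2) ∈ S)) ↔
      ∃ g f h : Polynomial (ZMod p),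
        (g ∣ X ^ n - 1 ∧ h ∣ X ^ n - 1) ∧
        (mkR p n (g.comp (X ^ (n - 1)) * h) = 0 ∧
          mkR p n (g * h.comp (X ^ (n - 1))) = 0) ∧
        (mkR p n (g * f.comp (X ^ (n - 1))) = mkR p n (f * g.comp (X ^ (n - 1)))) ∧
        (∀ ab : (Fin n → ZMod p) × (Fin n → ZMod p),
          ab ∈ S ↔ ∃ a b : Polynomial (ZMod p),
            mkR p n (vecPoly ab.1) = mkR p n (a * g) ∧
            mkR p n (vecPoly ab.2) = mkR p n (a * f + b * h)) := by
  simp only [mkR_eq]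
  change _ ↔ ∃ g f h : Polynomial (ZMod p),
        (g ∣ X ^ n - 1 ∧ h ∣ X ^ n - 1) ∧
        (mk p n (g.comp (X ^ (n - 1)) * h) = 0 ∧
          mk p n (g * h.comp (X ^ (n - 1))) = 0) ∧
        (mk p n (g * f.comp (X ^ (n - 1))) = mk p n (f * g.comp (X ^ (n - 1)))) ∧
        (∀ ab : (Fin n → ZMod p) × (Fin n → ZMod p),
          ab ∈ S ↔ ∃ a b : Polynomial (ZMod p),
            phi p n ab.1 = mk p n (a * g) ∧
            phi p n ab.2 = mk p n (a * f + b * h))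
  simp only [map_mul, map_add, ← star_mk]
  have inj : ∀ {u v : Fin n → ZMod p}, phi p n u = phi p n v → u = v := by
    intro u v h
    exact sub_eq_zero.1 (phi_inj (by rw [phi_sub, h, sub_self]))
  constructor
  · rintro ⟨hiso, hcyc⟩
    have hform : ∀ ab ∈ S, ∀ cd ∈ S,
        phi p n ab.1 * star p n (phi p n cd.2) = phi p n ab.2 * star p n (phi p n cd.1) := by
      intro ab hab cd hcd
      rw [← sub_eq_zero, form_eq]
      have hk : ∀ m : ℕ, ((fun i => cd.1 (i - (Fin.ofNat n m))), fun i => cd.2 (i - Fin.ofNat n m)) ∈ S := by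
        intro m
        induction m with
        | zero =>
          have : Fin.ofNat n 0 = 0 := by ext; simp
          simpa [this] using hcd
        | succ m ih =>
          have h1 := hcyc _ ih
          have : Fin.ofNat n (m + 1) = 1 + Fin.ofNat n m := by
            ext; simp [Fin.val_add, add_comm]
          rw [this]
          simp only [← sub_sub]
          exact h1
      have : (fun k => sympInner ab (fun i => cd.1 (i - k), fun i => cd.2 (i - k)))
          = (0 : Fin n → ZMod p) := by
        ext k
        have h1 := hk k
        rw [Fin.ofNat_val_eq_self] at h1
        exact hiso _ hab _ h1
      rw [this, phi_zero]
    have hmul : ∀ q : Polynomial (ZMod p), ∀ ab ∈ S, ∃ cd ∈ S,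
        phi p n cd.1 = mk p n q * phi p n ab.1 ∧ phi p n cd.2 = mk p n q * phi p n ab.2 := by
      intro q ab hab
      induction q using Polynomial.induction_on with
      | C a =>
        exact ⟨a • ab, S.smul_mem a hab, phi_smul _ _, phi_smul _ _⟩
      | add q r hq hr =>
        obtain ⟨c, hc, h1, h2⟩ := hq
        obtain ⟨d, hd, h3, h4⟩ := hr
        refine ⟨c + d, S.add_mem hc hd, ?_, ?_⟩
        · rw [Prod.fst_add, phi_add, h1, h3, map_add, add_mul]
        · rw [Prod.snd_add, phi_add, h2, h4, map_add, add_mul]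
      | monomial k a hq =>
        obtain ⟨c, hc, h1, h2⟩ := hq
        refine ⟨_, hcyc c hc, ?_, ?_⟩
        · rw [phi_shift, h1, pow_succ, map_mul, map_mul, map_mul]; ring
        · rw [phi_shift, h2, pow_succ, map_mul, map_mul, map_mul]; ring
    let I : Ideal (Polynomial (ZMod p)) :=
      { carrier := {q | ∃ ab ∈ S, phi p n ab.1 = mk p n q}
        zero_mem' := ⟨0, S.zero_mem, by simp [phi_zero]⟩
        add_mem' := by
          rintro a b ⟨c, hc, h1⟩ ⟨d, hd, h2⟩
          exact ⟨c + d, S.add_mem hc hd, by rw [Prod.fst_add, phi_add, h1, h2, map_add]⟩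
        smul_mem' := by
          rintro a b ⟨c, hc, h1⟩
          obtain ⟨d, hd, h2, -⟩ := hmul a c hc
          exact ⟨d, hd, by rw [h2, h1, smul_eq_mul, map_mul]⟩ }
    let J : Ideal (Polynomial (ZMod p)) :=
      { carrier := {q | ∃ ab ∈ S, phi p n ab.1 = 0 ∧ phi p n ab.2 = mk p n q}
        zero_mem' := ⟨0, S.zero_mem, by simp [phi_zero], by simp [phi_zero]⟩
        add_mem' := by
          rintro a b ⟨c, hc, h1, h1'⟩ ⟨d, hd, h2, h2'⟩
          exact ⟨c + d, S.add_mem hc hd, by rw [Prod.fst_add, phi_add, h1, h2, add_zero],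
            by rw [Prod.snd_add, phi_add, h1', h2', map_add]⟩
        smul_mem' := by
          rintro a b ⟨c, hc, h1, h1'⟩
          obtain ⟨d, hd, h2, h2'⟩ := hmul a c hc
          exact ⟨d, hd, by rw [h2, h1, mul_zero], by rw [h2', h1', smul_eq_mul, map_mul]⟩ }
    have hz : mk p n (X ^ n - 1) = 0 := (mk_eq_zero p n _).2 dvd_rfl
    have hI : ∀ q, q ∈ I ↔ ∃ ab ∈ S, phi p n ab.1 = mk p n q := fun q => Iff.rfl
    have hJ : ∀ q, q ∈ J ↔ ∃ ab ∈ S, phi p n ab.1 = 0 ∧ phi p n ab.2 = mk p n q :=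
      fun q => Iff.rfl
    obtain ⟨g, hg⟩ := (IsPrincipalIdealRing.principal I).principal
    obtain ⟨h, hh⟩ := (IsPrincipalIdealRing.principal J).principal
    have hgI : ∀ q, q ∈ I ↔ g ∣ q := fun q => by
      rw [hg]; exact Ideal.mem_span_singleton
    have hhJ : ∀ q, q ∈ J ↔ h ∣ q := fun q => by
      rw [hh]; exact Ideal.mem_span_singleton
    obtain ⟨G, hGS, hG1⟩ := (hI g).1 ((hgI g).2 dvd_rfl)
    obtain ⟨H, hHS, hH1, hH2⟩ := (hJ h).1 ((hhJ h).2 dvd_rfl)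
    have hG2 : phi p n G.2 = mk p n (vecPoly G.2) := rfl
    refine ⟨g, vecPoly G.2, h, ⟨?_, ?_⟩, ⟨?_, ?_⟩, ?_, ?_⟩
    · exact (hgI _).1 ((hI _).2 ⟨0, S.zero_mem, by rw [hz]; exact phi_zero⟩)
    · exact (hhJ _).1 ((hJ _).2 ⟨0, S.zero_mem, phi_zero, by rw [hz]; exact phi_zero⟩)
    · have := hform H hHS G hGS
      rw [hH1, zero_mul, hH2, hG1] at this
      rw [mul_comm]; exact this.symm
    · have := hform G hGS H hHS
      rwa [hH1, map_zero, mul_zero, hH2, hG1] at this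
    · have := hform G hGS G hGS
      rwa [hG1, hG2] at this
    · intro ab
      rw [← hG2]
      constructor
      · intro hab
        obtain ⟨a, ha⟩ := (hgI (vecPoly ab.1)).1 ((hI _).2 ⟨ab, hab, rfl⟩)
        have ha' : phi p n ab.1 = mk p n a * mk p n g := by
          rw [phi, ha, map_mul, mul_comm]
        obtain ⟨K, hK, hK1, hK2⟩ := hmul a G hGS
        obtain ⟨b, hb⟩ := (hhJ (vecPoly (ab - K).2)).1 ((hJ _).2 ⟨ab - K, S.sub_mem hab hK, by
          rw [Prod.fst_sub, phi_sub, hK1, hG1, ha', sub_self], rfl⟩)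
        refine ⟨a, b, ha', ?_⟩
        have hb' : phi p n (ab - K).2 = mk p n b * mk p n h := by
          rw [phi, hb, map_mul, mul_comm]
        rw [Prod.snd_sub, phi_sub, hK2] at hb'
        rw [← hb']; ring
      · rintro ⟨a, b, h1, h2⟩
        obtain ⟨K, hK, hK1, hK2⟩ := hmul a G hGS
        obtain ⟨L, hL, hL1, hL2⟩ := hmul b H hHS
        have : ab = K + L := by
          refine Prod.ext (inj ?_) (inj ?_)
          · rw [Prod.fst_add, phi_add, h1, hK1, hL1, hG1, hH1, mul_zero, add_zero]
          · rw [Prod.snd_add, phi_add, h2, hK2, hL2, hH2]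
        rw [this]
        exact S.add_mem hK hL
  · rintro ⟨g, f, h, -, ⟨h1, h2⟩, h3, hS⟩
    constructor
    · intro ab hab cd hcd
      obtain ⟨a, b, ha, hb⟩ := (hS ab).1 hab
      obtain ⟨c, d, hc, hd⟩ := (hS cd).1 hcd
      have key := form_eq ab cd
      rw [ha, hb, hc, hd] at key
      simp only [map_add, map_mul] at key
      have hz := phi_inj (key.symm.trans (by
        linear_combination (mk p n a * star p n (mk p n c)) * h3
          + (mk p n a * star p n (mk p n d)) * h2 - (mk p n b * star p n (mk p n c)) * h1))
      have := congrFun hz 0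
      simpa using this
    · intro ab hab
      obtain ⟨a, b, ha, hb⟩ := (hS ab).1 hab
      refine (hS _).2 ⟨X * a, X * b, ?_, ?_⟩
      · rw [phi_shift, ha, map_mul]; ring
      · rw [phi_shift, hb, map_mul, map_mul]; ring
end

section
/- Let p be a prime and n a positive integer coprime to p. Let S be a totally isotropic, separately cyclic linear subspace of F_p^n × F_p^n generated by the triple (g,f,h), i.e., S viewed in R × R (R = F_p[X]/(X^n−1)) equals the set of pairs (a g, a f + b h) with a, b ranging over F_p[X], where g, h divide X^n − 1. Then the centraliser of S is exactly the set of pairs (c,d) in R × R such that: (1) c(X)h(X^{−1}) = c(X^{−1})h(X) = 0 in R, and (2) g(X)d(X^{−1}) = f(X)c(X^{−1}) in R. -/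
open Polynomial

theorem mkR_eq_iff (p n : ℕ) (a b : Polynomial (ZMod p)) :
    mkR p n a = mkR p n b ↔ (X ^ n - 1 : Polynomial (ZMod p)) ∣ a - b := by
  unfold mkR
  rw [Ideal.Quotient.eq, Ideal.mem_span_singleton]

theorem mkR_zero_iff (p n : ℕ) (a : Polynomial (ZMod p)) :
    mkR p n a = 0 ↔ (X ^ n - 1 : Polynomial (ZMod p)) ∣ a := by
  unfold mkR
  rw [Ideal.Quotient.eq_zero_iff_mem, Ideal.mem_span_singleton]

/-- The functional constant coefficient in R, on polynomials. -/
noncomputable def trT (p n : ℕ) : Polynomial (ZMod p) →ₗ[ZMod p] ZMod p :=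
  Polynomial.lsum (fun k => if n ∣ k then LinearMap.id else 0)

theorem trT_monomial (p n k : ℕ) (a : ZMod p) :
    trT p n (monomial k a) = if n ∣ k then a else 0 := by
  unfold trT
  rw [Polynomial.lsum_apply, Polynomial.sum_monomial_index]
  · split_ifs <;> simp
  · simp

theorem trT_mul (p n : ℕ) (q : Polynomial (ZMod p)) :
    trT p n ((X ^ n - 1) * q) = 0 := by
  induction q using Polynomial.induction_on' with
  | add a b ha hb => rw [mul_add, map_add, ha, hb, add_zero]
  | monomial k a =>
    rw [sub_mul, one_mul, X_pow_mul_monomial, map_sub, trT_monomial, trT_monomial]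
    simp

theorem trT_congr (p n : ℕ) {a b : Polynomial (ZMod p)} (hab : mkR p n a = mkR p n b) :
    trT p n a = trT p n b := by
  rw [mkR_eq_iff] at hab
  obtain ⟨q, hq⟩ := hab
  rw [← sub_eq_zero, ← map_sub, hq, trT_mul]

theorem trT_dot (p n : ℕ) [NeZero n] (u v : Fin n → ZMod p) :
    trT p n (vecPoly u * (vecPoly v).comp (X ^ (n - 1))) = ∑ i, u i * v i := by
  have hn : 0 < n := Nat.pos_of_ne_zero (NeZero.ne n)
  unfold vecPoly
  have hs : (∑ i : Fin n, monomial (i : ℕ) (v i)).comp (X ^ (n - 1)) =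
      ∑ i : Fin n, (monomial (i : ℕ) (v i)).comp (X ^ (n - 1)) :=
    map_sum (compRingHom (X ^ (n - 1) : Polynomial (ZMod p))) _ _
  rw [hs, Finset.sum_mul_sum, map_sum]
  refine Finset.sum_congr rfl fun i _ => ?_
  rw [map_sum, Finset.sum_eq_single i]
  · rw [monomial_comp, ← pow_mul, ← mul_assoc, monomial_mul_C, monomial_mul_X_pow, trT_monomial,
      if_pos]
    refine ⟨i, ?_⟩
    obtain ⟨m, rfl⟩ : ∃ m, n = m + 1 := ⟨n - 1, by omega⟩
    simp only [Nat.add_sub_cancel]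
    ring
  · intro j _ hj
    rw [monomial_comp, ← pow_mul, ← mul_assoc, monomial_mul_C, monomial_mul_X_pow, trT_monomial,
      if_neg]
    intro hd
    apply hj
    have h2 : (i : ℕ) + (n - 1) * j + j = i + n * j := by
      obtain ⟨m, rfl⟩ : ∃ m, n = m + 1 := ⟨n - 1, by omega⟩
      simp only [Nat.add_sub_cancel]
      ring
    have h3 : (i : ℕ) + n * j ≡ 0 + j [MOD n] := by
      rw [← h2]
      exact Nat.ModEq.add_right _ ((Nat.modEq_zero_iff_dvd).2 hd)
    have h4 : (i : ℕ) % n = j % n := by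
      simpa [Nat.ModEq] using h3
    rw [Nat.mod_eq_of_lt i.2, Nat.mod_eq_of_lt j.2] at h4
    exact Fin.ext h4.symm
  · simp

theorem exists_vec (p n : ℕ) [Fact p.Prime] [NeZero n] (q : Polynomial (ZMod p)) :
    ∃ u : Fin n → ZMod p, mkR p n (vecPoly u) = mkR p n q := by
  have hn : n ≠ 0 := NeZero.ne n
  have hm : (X ^ n - 1 : Polynomial (ZMod p)).Monic := monic_X_pow_sub_C 1 hn
  refine ⟨fun i => (q %ₘ (X ^ n - 1)).coeff i, ?_⟩
  have h1 : vecPoly (fun i : Fin n => (q %ₘ (X ^ n - 1)).coeff i) = q %ₘ (X ^ n - 1) := by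
    unfold vecPoly
    have hd : (q %ₘ (X ^ n - 1)).natDegree < n := by
      have := natDegree_modByMonic_lt q hm (by
        intro h
        have := congrArg natDegree h
        rw [show (X ^ n - 1 : Polynomial (ZMod p)) = X ^ n - C 1 by simp,
          natDegree_X_pow_sub_C] at this
        simp at this
        exact hn this)
      rwa [show (X ^ n - 1 : Polynomial (ZMod p)) = X ^ n - C 1 by simp,
          natDegree_X_pow_sub_C] at this
    conv_rhs => rw [as_sum_range' _ n hd]
    rw [Finset.sum_range]
  rw [h1, mkR_eq_iff]
  refine ⟨-(q /ₘ (X ^ n - 1)), ?_⟩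
  linear_combination modByMonic_add_div q (X ^ n - 1)

theorem trT_nondeg (p n : ℕ) [Fact p.Prime] [NeZero n] (q : Polynomial (ZMod p))
    (hq : ∀ a, trT p n (a * q) = 0) : mkR p n q = 0 := by
  obtain ⟨u, hu⟩ := exists_vec p n q
  have hu0 : u = 0 := by
    funext j
    have h1 := trT_dot p n u (Pi.single j 1)
    rw [trT_congr p n (b := (vecPoly (Pi.single j 1)).comp (X ^ (n - 1)) * q), hq] at h1
    · simpa [Pi.single_apply] using h1.symm
    · unfold mkR at hu ⊢
      rw [map_mul, map_mul, hu, mul_comm]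
  rw [← hu, hu0]
  simp [vecPoly, mkR]

theorem X_dvd_comp (p n : ℕ) :
    (X ^ n - 1 : Polynomial (ZMod p)) ∣ (X ^ n - 1 : Polynomial (ZMod p)).comp (X ^ (n - 1)) := by
  simp only [sub_comp, pow_comp, X_comp, one_comp]
  rw [← pow_mul, mul_comm, pow_mul]
  exact sub_one_dvd_pow_sub_one _ _

theorem dvd_comp (p n : ℕ) {q : Polynomial (ZMod p)} (hq : X ^ n - 1 ∣ q) :
    X ^ n - 1 ∣ q.comp (X ^ (n - 1)) := by
  obtain ⟨r, rfl⟩ := hq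
  rw [mul_comp]
  exact Dvd.dvd.mul_right (X_dvd_comp p n) _

theorem mkR_comp_comp (p n : ℕ) [NeZero n] (q : Polynomial (ZMod p)) :
    mkR p n ((q.comp (X ^ (n - 1))).comp (X ^ (n - 1))) = mkR p n q := by
  have hn : 0 < n := Nat.pos_of_ne_zero (NeZero.ne n)
  have hX : (mkR p n X) ^ n = 1 := by
    have : mkR p n (X ^ n) = mkR p n 1 := by rw [mkR_eq_iff]
    simpa [mkR] using this
  have hX2 : ((mkR p n X) ^ (n - 1)) ^ (n - 1) = mkR p n X := by
    obtain ⟨m, rfl⟩ : ∃ m, n = m + 1 := ⟨n - 1, by omega⟩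
    simp only [Nat.add_sub_cancel]
    have : mkR p (m+1) X * (mkR p (m+1) X) ^ m = 1 := by rw [← pow_succ', hX]
    have h2 : (mkR p (m+1) X) ^ m * ((mkR p (m+1) X) ^ m) ^ m = 1 := by
      rw [← pow_succ', ← pow_mul, mul_comm, pow_mul, hX, one_pow]
    linear_combination mkR p (m+1) X * h2 - ((mkR p (m+1) X) ^ m) ^ m * this
  induction q using Polynomial.induction_on' with
  | add a b ha hb =>
    unfold mkR at *
    simp only [add_comp, map_add, ha, hb]
  | monomial k a =>
    unfold mkR at *
    rw [← C_mul_X_pow_eq_monomial]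
    simp only [mul_comp, C_comp, pow_comp, X_comp, map_mul, map_pow, hX2]

/-- Let `p` be a prime, `n` a positive integer coprime to `p` and
`S` a totally isotropic, separately cyclic linear subspace of `F_p^n × F_p^n`
generated by the triple `(g,f,h)` (with `g, h ∣ X^n − 1`).  Then the centraliser
of `S` consists exactly of those pairs `(c,d)` such that
(1) `c(X)h(X^{−1}) = c(X^{−1})h(X) = 0` in `R = F_p[X]/(X^n−1)`, and
(2) `g(X)d(X^{−1}) = f(X)c(X^{−1})` in `R`. -/
theorem stmt_8 (p n : ℕ) [Fact p.Prime] [NeZero n] (hco : Nat.Coprime n p)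
    (S : Submodule (ZMod p) ((Fin n → ZMod p) × (Fin n → ZMod p)))
    (g f h : Polynomial (ZMod p))
    (hg : g ∣ X ^ n - 1) (hh : h ∣ X ^ n - 1)
    (hiso : ∀ ab ∈ S, ∀ cd ∈ S, sympInner ab cd = 0)
    (hcyc : ∀ ab ∈ S, (shiftN ab.1, shiftN ab.2) ∈ S)
    (hgen : ∀ ab : (Fin n → ZMod p) × (Fin n → ZMod p),
      ab ∈ S ↔ ∃ a b : Polynomial (ZMod p),
        mkR p n (vecPoly ab.1) = mkR p n (a * g) ∧
        mkR p n (vecPoly ab.2) = mkR p n (a * f + b * h)) :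
    ∀ cd : (Fin n → ZMod p) × (Fin n → ZMod p),
      (∀ ab ∈ S, sympInner cd ab = 0) ↔
        (mkR p n (vecPoly cd.1 * h.comp (X ^ (n - 1))) = 0 ∧
          mkR p n ((vecPoly cd.1).comp (X ^ (n - 1)) * h) = 0 ∧
          mkR p n (g * (vecPoly cd.2).comp (X ^ (n - 1))) =
            mkR p n (f * (vecPoly cd.1).comp (X ^ (n - 1)))) := by
  intro cd
  have key : ∀ (ab : (Fin n → ZMod p) × (Fin n → ZMod p)) (a b : Polynomial (ZMod p)),
      mkR p n (vecPoly ab.1) = mkR p n (a * g) →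
      mkR p n (vecPoly ab.2) = mkR p n (a * f + b * h) →
      sympInner cd ab =
        trT p n (a * (f * (vecPoly cd.1).comp (X ^ (n - 1)) -
          g * (vecPoly cd.2).comp (X ^ (n - 1)))) +
        trT p n (b * ((vecPoly cd.1).comp (X ^ (n - 1)) * h)) := by
    intro ab a b h1 h2
    have e1 : sympInner cd ab = (∑ i, ab.2 i * cd.1 i) - ∑ i, ab.1 i * cd.2 i := by
      simp only [sympInner, mul_comm]
    rw [e1, ← trT_dot, ← trT_dot, ← map_sub, ← map_add]
    apply trT_congr
    unfold mkR at h1 h2 ⊢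
    rw [map_sub, map_mul, map_mul, h1, h2, ← map_mul, ← map_mul, ← map_sub]
    congr 1
    ring
  constructor
  · intro hc
    have all : ∀ a b, trT p n (a * (f * (vecPoly cd.1).comp (X ^ (n - 1)) -
          g * (vecPoly cd.2).comp (X ^ (n - 1)))) +
        trT p n (b * ((vecPoly cd.1).comp (X ^ (n - 1)) * h)) = 0 := by
      intro a b
      obtain ⟨u, hu⟩ := exists_vec p n (a * g)
      obtain ⟨v, hv⟩ := exists_vec p n (a * f + b * h)
      rw [← key (u, v) a b hu hv]
      exact hc _ ((hgen _).2 ⟨a, b, hu, hv⟩)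
    have r1 := trT_nondeg p n _ (fun a => by simpa using all a 0)
    have r2 := trT_nondeg p n _ (fun b => by simpa using all 0 b)
    refine ⟨?_, r2, ?_⟩
    · have r3 := dvd_comp p n ((mkR_zero_iff p n _).1 r2)
      rw [← mkR_zero_iff, mul_comp] at r3
      have r4 := mkR_comp_comp p n (vecPoly cd.1)
      unfold mkR at r3 r4 ⊢
      rw [map_mul, r4] at r3
      rw [map_mul, r3]
    · rw [mkR_zero_iff] at r1
      exact ((mkR_eq_iff p n _ _).2 r1).symm
  · rintro ⟨-, r2, r1⟩ ab hab
    obtain ⟨a, b, h1, h2⟩ := (hgen ab).1 hab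
    have z : trT p n 0 = 0 := map_zero _
    have t1 : trT p n (a * (f * (vecPoly cd.1).comp (X ^ (n - 1)) -
          g * (vecPoly cd.2).comp (X ^ (n - 1)))) = trT p n 0 := by
      apply trT_congr
      unfold mkR at r1 ⊢
      rw [map_mul, map_sub, r1, sub_self, mul_zero, map_zero]
    have t2 : trT p n (b * ((vecPoly cd.1).comp (X ^ (n - 1)) * h)) = trT p n 0 := by
      apply trT_congr
      unfold mkR at r2 ⊢
      rw [map_mul, r2, mul_zero, map_zero]
    rw [key ab a b h1 h2, t1, t2, z, add_zero]
end

section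
/- Let m be a positive integer and n = 4^m + 1. Let f(X) be an irreducible factor of X^n − 1 over F_2 with f(X) ≠ X + 1. Then the degree of f is an even number 2t, and there exists an irreducible polynomial f_1(X) ∈ F_4[X] of degree t such that f = f_1 · σ(f_1) in F_4[X], where σ(f_1) is obtained from f_1 by applying the nontrivial automorphism of F_4 to each coefficient. -/
open Polynomial

/-- The field with four elements, `F₄ = F₂(η)` with `η² + η + 1 = 0`. -/
abbrev F4 : Type := GaloisField 2 2

lemma aux_fixed (x : F4) (hx : x ^ 2 = x) : ∃ a : ZMod 2, algebraMap (ZMod 2) F4 a = x := by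
  have h : x * (x - 1) = 0 := by linear_combination hx
  rcases mul_eq_zero.mp h with h | h
  · exact ⟨0, by simp [h]⟩
  · exact ⟨1, by simp [sub_eq_zero.mp h]⟩

lemma aux_four (x : F4) : x ^ 4 = x := by
  let _ := Fintype.ofFinite F4
  have h := FiniteField.pow_card x
  rwa [← Nat.card_eq_fintype_card, GaloisField.card 2 2 two_ne_zero] at h

lemma aux_even {K : Type*} [Field K] [CharP K 2] (m d : ℕ) (α : K)
    (h1 : α ^ (4 ^ m + 1) = 1) (h2 : α ^ (2 ^ d) = α) (hα : α ≠ 1) : Even d := by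
  by_contra hd
  rw [Nat.not_even_iff_odd] at hd
  have h0 : α ≠ 0 := by
    rintro rfl
    simp at h1
  have e1 : ∀ k, α ^ (2 ^ (d * k)) = α := by
    intro k
    induction k with
    | zero => simp
    | succ k ih => rw [Nat.mul_succ, pow_add, pow_mul, ih, h2]
  have e2 : α ^ (4 ^ m) = α⁻¹ := by
    rw [pow_succ] at h1
    exact eq_inv_of_mul_eq_one_left h1
  have e3 : ∀ k, α ^ (4 ^ (m * (2 * k + 1))) = α⁻¹ := by
    intro k
    induction k with
    | zero => simpa using e2
    | succ k ih =>
      have : m * (2 * (k + 1) + 1) = m * (2 * k + 1) + m + m := by ring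
      rw [this, pow_add, pow_add, pow_mul, pow_mul, ih, inv_pow, inv_pow, e2, inv_pow, e2, inv_inv]
  obtain ⟨k, rfl⟩ := hd
  have e4 := e1 (2 * m)
  have e5 := e3 k
  have : (2 : ℕ) ^ ((2 * k + 1) * (2 * m)) = 4 ^ (m * (2 * k + 1)) := by
    rw [show (4 : ℕ) = 2 ^ 2 by norm_num, ← pow_mul]
    congr 1
    ring
  rw [this, e5] at e4
  have e6 : α * α = 1 := by
    nth_rewrite 1 [← e4]
    exact inv_mul_cancel₀ h0
  apply hα
  have e7 : (α - 1) ^ 2 = 0 := by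
    rw [sub_pow_char, pow_two, e6]; simp
  exact sub_eq_zero.mp (pow_eq_zero_iff (two_ne_zero) |>.mp e7)

/-- Let `n = 4^m + 1` for a positive integer `m` and let `f` be an
irreducible factor of `X^n − 1` over `F₂` with `f ≠ X + 1`.  Then `deg f = 2t` is
even and, over `F₄`, `f` splits as `f = f₁·σ(f₁)` where `f₁ ∈ F₄[X]` is irreducible
of degree `t` and `σ` is the nontrivial automorphism of `F₄` (the Frobenius
`x ↦ x²`) applied coefficientwise. -/
theorem stmt_11 (m n : ℕ) (hm : 0 < m) (hn : n = 4 ^ m + 1)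
    (f : Polynomial (ZMod 2)) (hf : Irreducible f)
    (hdvd : f ∣ X ^ n - 1) (hne : f ≠ X + 1) :
    ∃ t : ℕ, f.natDegree = 2 * t ∧
      ∃ f1 : Polynomial F4, Irreducible f1 ∧ f1.natDegree = t ∧
        f.map (algebraMap (ZMod 2) F4) = f1 * f1.map (frobenius F4 2) := by
  subst hn
  have hlead : ∀ a : ZMod 2, a ≠ 0 → a = 1 := by decide
  have hmon : f.Monic := hlead _ (leadingCoeff_ne_zero.mpr hf.ne_zero)
  have : Fact (Irreducible f) := ⟨hf⟩
  have : FiniteDimensional (ZMod 2) (AdjoinRoot f) := (AdjoinRoot.powerBasis hf.ne_zero).finite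
  have hfin : Module.finrank (ZMod 2) (AdjoinRoot f) = f.natDegree := by
    rw [(AdjoinRoot.powerBasis hf.ne_zero).finrank, AdjoinRoot.powerBasis_dim]
  have : Finite (AdjoinRoot f) := Module.finite_of_finite (ZMod 2)
  have : CharP (AdjoinRoot f) 2 := charP_of_injective_algebraMap (algebraMap (ZMod 2) (AdjoinRoot f)).injective 2
  set α := AdjoinRoot.root f with hα
  have hroot : aeval α f = 0 := by simp [hα, AdjoinRoot.aeval_eq]
  have hdv : ∀ h : (ZMod 2)[X], aeval α h = 0 → f ∣ h := by
    intro h hh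
    rwa [AdjoinRoot.aeval_eq, AdjoinRoot.mk_eq_zero] at hh
  have heven : Even f.natDegree := by
    apply aux_even m f.natDegree α
    · obtain ⟨g, hg⟩ := hdvd
      have := congrArg (aeval α) hg
      simp only [map_sub, map_mul, hroot, map_pow, aeval_X, map_one, zero_mul] at this
      exact sub_eq_zero.mp this
    · let _ := Fintype.ofFinite (AdjoinRoot f)
      have := FiniteField.pow_card α
      rwa [Module.card_eq_pow_finrank (K := ZMod 2), hfin, ZMod.card] at this
    · intro h1
      have h2 : f ∣ X + 1 := hdv _ (by simp [h1, CharTwo.add_self_eq_zero])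
      apply hne
      refine eq_of_monic_of_associated hmon (by simpa using monic_X_add_C (1 : ZMod 2)) ?_
      refine hf.associated_of_dvd ?_ h2
      have h3 := irreducible_X_sub_C (-1 : ZMod 2)
      simpa only [map_neg, map_one, sub_neg_eq_add] using h3
  obtain ⟨t, ht⟩ := heven
  rw [← two_mul] at ht
  refine ⟨t, ht, ?_⟩
  have h4 : Module.finrank (ZMod 2) F4 = 2 := GaloisField.finrank 2 two_ne_zero
  obtain ⟨φ⟩ : Nonempty (F4 →ₐ[ZMod 2] AdjoinRoot f) := by
    apply FiniteField.nonempty_algHom_of_finrank_dvd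
    rw [h4, hfin, ht]
    exact dvd_mul_right _ _
  let _ : Algebra F4 (AdjoinRoot f) := φ.toRingHom.toAlgebra
  have : IsScalarTower (ZMod 2) F4 (AdjoinRoot f) := IsScalarTower.of_algebraMap_eq' (φ.comp_algebraMap).symm
  have : FiniteDimensional F4 (AdjoinRoot f) := FiniteDimensional.right (ZMod 2) F4 _
  have hft : Module.finrank F4 (AdjoinRoot f) = t := by
    have := Module.finrank_mul_finrank (ZMod 2) F4 (AdjoinRoot f)
    rw [h4, hfin, ht] at this
    omega
  have hint : IsIntegral F4 α := Algebra.IsIntegral.isIntegral α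
  set f1 := minpoly F4 α with hf1
  have hf1m : f1.Monic := minpoly.monic hint
  have hle : f1.natDegree ≤ t := hft ▸ minpoly.natDegree_le α
  have hfix : (f1 * f1.map (frobenius F4 2)).map (frobenius F4 2) = f1 * f1.map (frobenius F4 2) := by
    rw [Polynomial.map_mul, Polynomial.map_map, mul_comm]
    congr 1
    convert Polynomial.map_id
    ext x
    simp only [RingHom.comp_apply, frobenius_def, RingHom.id_apply]
    rw [← pow_mul]
    exact aux_four x
  obtain ⟨h, hh⟩ : ∃ h : (ZMod 2)[X], h.map (algebraMap (ZMod 2) F4) = f1 * f1.map (frobenius F4 2) := by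
    rw [← Polynomial.mem_lifts, Polynomial.lifts_iff_coeff_lifts]
    intro k
    apply aux_fixed
    have := congrArg (fun p => coeff p k) hfix
    simpa only [coeff_map, frobenius_def] using this
  have hMm : (f1 * f1.map (frobenius F4 2)).Monic := hf1m.mul (hf1m.map _)
  have hhm : h.Monic := by
    rw [← hh] at hMm
    exact monic_of_injective (algebraMap (ZMod 2) F4).injective hMm
  have hhd : h.natDegree = 2 * f1.natDegree := by
    rw [← natDegree_map (algebraMap (ZMod 2) F4), hh, hf1m.natDegree_mul (hf1m.map _), natDegree_map]
    ring
  have hfh : f ∣ h := by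
    apply hdv
    rw [← aeval_map_algebraMap F4, hh, map_mul, minpoly.aeval, zero_mul]
  have hdle : f.natDegree ≤ h.natDegree := natDegree_le_of_dvd hfh hhm.ne_zero
  have heq : h = f := eq_of_monic_of_dvd_of_natDegree_le hmon hhm hfh (by omega)
  exact ⟨f1, minpoly.irreducible hint, by omega, by rw [← heq, hh]⟩
end

section
/- Let m be a positive integer, n = 4^m + 1, and let g ∈ F_2[X] and h ∈ F_4[X] be monic polynomials with g·h·σ(h) = X^n − 1 in F_4[X]. Let S be the ideal of F_4[X]/(X^n−1) generated by g·h. Then S is totally isotropic: for any two elements u = a + ηb and v = c + ηd of S, where a, b, c, d lie in the image of F_2[X] in F_4[X]/(X^n−1), the identity a(X)d(X^{−1}) = b(X)c(X^{−1}) holds in F_4[X]/(X^n−1). -/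
open Polynomial

/-- The image in `F₄[X]/(X^n − 1)` of a polynomial with `F₂` coefficients. -/
noncomputable def mk2 (n : ℕ) (q : Polynomial (ZMod 2)) :
    Polynomial F4 ⧸ Ideal.span {(X : Polynomial F4) ^ n - 1} :=
  Ideal.Quotient.mk _ (q.map (algebraMap (ZMod 2) F4))

theorem comp_X_pow_four (m : ℕ) (c : Polynomial (ZMod 2)) :
    c.comp (X ^ 4 ^ m) = c ^ 4 ^ m := by
  induction m with
  | zero => simp
  | succ k ih =>
    have h2 : ∀ p : Polynomial (ZMod 2), p.comp (X ^ 2) = p ^ 2 := by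
      intro p
      have := ZMod.expand_card (p := 2) p
      rwa [expand_eq_comp_X_pow] at this
    have h4 : ∀ p : Polynomial (ZMod 2), p.comp (X ^ 4) = p ^ 4 := by
      intro p
      have : (X : Polynomial (ZMod 2)) ^ 4 = (X ^ 2 : Polynomial (ZMod 2)).comp (X ^ 2) := by
        simp; ring
      rw [this, ← comp_assoc, h2, h2]; ring
    have : (X : Polynomial (ZMod 2)) ^ 4 ^ (k + 1)
        = (X ^ 4 ^ k : Polynomial (ZMod 2)).comp (X ^ 4) := by
      simp; ring
    rw [this, ← comp_assoc, ih, pow_comp, h4]; ring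

theorem C_add_pow_four (m : ℕ) (e : F4) (he : e ^ 4 = e) (p q : Polynomial F4) :
    (p + C e * q) ^ 4 ^ m = p ^ 4 ^ m + C e * q ^ 4 ^ m := by
  have he' : e ^ 4 ^ m = e := by
    induction m with
    | zero => simp
    | succ k ih => rw [pow_succ, pow_mul, ih, he]
  have h4 : (4 : ℕ) ^ m = 2 ^ (2 * m) := by rw [pow_mul]; norm_num
  have := add_pow_char_pow (p := 2) (n := 2 * m) p (C e * q)
  rw [← h4, mul_pow, ← C_pow, he'] at this
  exact this

theorem mem_span_mk_dvd (N K U : Polynomial F4) (hK : K ∣ N)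
    (hU : Ideal.Quotient.mk (Ideal.span {N}) U ∈
      Ideal.span {Ideal.Quotient.mk (Ideal.span {N}) K}) : K ∣ U := by
  rw [Ideal.mem_span_singleton] at hU
  obtain ⟨w, hw⟩ := hU
  obtain ⟨w, rfl⟩ := Ideal.Quotient.mk_surjective w
  rw [← map_mul, Ideal.Quotient.eq, Ideal.mem_span_singleton] at hw
  have := (hK.trans hw).add (Dvd.intro w rfl : K ∣ K * w)
  simpa using this

/-- Let `n = 4^m + 1`, let `g ∈ F₂[X]` and `h ∈ F₄[X]` be monic
with `g·h·σ(h) = X^n − 1` over `F₄` (σ the nontrivial automorphism of `F₄`, i.e.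
the Frobenius `x ↦ x²`, applied coefficientwise), and let `S` be the ideal of
`F₄[X]/(X^n−1)` generated by `g·h`.  Then `S` is totally isotropic: for any two
elements `u = a + ηb` and `v = c + ηd` of `S` with `a,b,c,d` in the image of
`F₂[X]`, the identity `a(X)d(X^{−1}) = b(X)c(X^{−1})` holds in `F₄[X]/(X^n−1)`
(`X^{−1}` being the class of `X^{n−1}`). -/
theorem stmt_12 (m n : ℕ) (hm : 0 < m) (hn : n = 4 ^ m + 1)
    (η : F4) (hη : η ^ 2 + η + 1 = 0)
    (g : Polynomial (ZMod 2)) (h : Polynomial F4)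
    (hg : g.Monic) (hh : h.Monic)
    (hfact : g.map (algebraMap (ZMod 2) F4) * h * h.map (frobenius F4 2) =
      X ^ n - 1) :
    ∀ a b c d : Polynomial (ZMod 2),
      mk2 n a + algebraMap F4 _ η * mk2 n b ∈
        Ideal.span {Ideal.Quotient.mk (Ideal.span {(X : Polynomial F4) ^ n - 1})
          (g.map (algebraMap (ZMod 2) F4) * h)} →
      mk2 n c + algebraMap F4 _ η * mk2 n d ∈
        Ideal.span {Ideal.Quotient.mk (Ideal.span {(X : Polynomial F4) ^ n - 1})
          (g.map (algebraMap (ZMod 2) F4) * h)} →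
      mk2 n (a * d.comp (X ^ (n - 1))) = mk2 n (b * c.comp (X ^ (n - 1))) := by
  intro a b c d hu hv
  set ι := algebraMap (ZMod 2) F4
  have hfr : ∀ p : Polynomial (ZMod 2), (p.map ι).map (frobenius F4 2) = p.map ι := by
    intro p
    rw [map_map]
    congr 1
    exact Subsingleton.elim _ _
  have hη2 : η ^ 2 = η + 1 := by
    have h2 : (2 : F4) = 0 := CharTwo.two_eq_zero
    linear_combination hη - (η + 1) * h2
  have h2 : (2 : F4) = 0 := CharTwo.two_eq_zero
  have hη4 : η ^ 4 = η := by
    linear_combination (η ^ 2 + η + 2) * hη2 + (η + 1) * h2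
  have hη4' : (η + 1) ^ 4 = η + 1 := by
    rw [← hη2]
    linear_combination (η ^ 4 + η) * hη4
  have hK : g.map ι * h ∣ X ^ n - 1 := ⟨_, hfact.symm⟩
  have hU : g.map ι * h ∣ a.map ι + C η * b.map ι :=
    mem_span_mk_dvd _ _ _ hK hu
  have hV : g.map ι * h ∣ c.map ι + C η * d.map ι :=
    mem_span_mk_dvd _ _ _ hK hv
  have key : ∀ p q : Polynomial (ZMod 2), g.map ι * h ∣ p.map ι + C η * q.map ι →
      g.map ι * h.map (frobenius F4 2) ∣ p.map ι + C (η + 1) * q.map ι := by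
    intro p q hpq
    have := Polynomial.map_dvd (frobenius F4 2) hpq
    simpa only [Polynomial.map_mul, Polynomial.map_add, hfr, map_C, frobenius_def, hη2] using this
  have hU' := key _ _ hU
  have hV' := key _ _ hV
  have hN : ∀ P Q : Polynomial F4, g.map ι * h ∣ P → g.map ι * h.map (frobenius F4 2) ∣ Q →
      X ^ n - 1 ∣ P * Q := by
    rintro P Q ⟨s, rfl⟩ ⟨t, rfl⟩
    exact ⟨g.map ι * s * t, by rw [← hfact]; ring⟩
  have hq : 4 ^ m ≠ 0 := by positivity
  have e1 := hN _ _ hU (dvd_pow hV' hq)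
  have e2 := hN _ _ (dvd_pow hV hq) hU'
  rw [C_add_pow_four m _ hη4'] at e1
  rw [C_add_pow_four m _ hη4] at e2
  have hn1 : n - 1 = 4 ^ m := by rw [hn]; rfl
  unfold mk2
  rw [Ideal.Quotient.eq, Ideal.mem_span_singleton, hn1, comp_X_pow_four, comp_X_pow_four]
  convert e1.sub e2 using 1
  simp only [Polynomial.map_mul, Polynomial.map_pow, C_add, C_1]
  ring
end

section
/- Let m be a positive integer, n = 4^m + 1, and let s ∈ F_2[X] be a divisor of X^n − 1. If a ∈ F_2[X] satisfies a(X)² ≡ a(X) + 1 (mod s(X)), then a(X^{n−1}) ≡ a(X) (mod s(X)), where a(X^{n−1}) denotes the polynomial composition of a with X^{n−1}. -/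
open Polynomial

/-- Let `n = 4^m + 1` for a positive integer `m` and let
`s ∈ F₂[X]` divide `X^n − 1`.  If `a ∈ F₂[X]` satisfies `a² ≡ a + 1 (mod s)`,
then `a(X^{n−1}) ≡ a(X) (mod s)`, where `a(X^{n−1})` is the composition of `a`
with `X^{n−1}`. -/
theorem stmt_16 (m n : ℕ) (hm : 0 < m) (hn : n = 4 ^ m + 1)
    (s a : Polynomial (ZMod 2)) (hs : s ∣ X ^ n - 1)
    (ha : s ∣ a ^ 2 - (a + 1)) :
    s ∣ a.comp (X ^ (n - 1)) - a := by
  have h2 : (2 : Polynomial (ZMod 2)) = 0 := CharTwo.two_eq_zero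
  have h4 : s ∣ a ^ 4 - a := by
    have e : a ^ 4 - a = (a ^ 2 - (a + 1)) * (a ^ 2 + a + 2) := by
      linear_combination (a + 1) * h2
    rw [e]
    exact Dvd.dvd.mul_right ha _
  have hexp : ∀ k : ℕ, ∀ f : Polynomial (ZMod 2), f.comp (X ^ 2 ^ k) = f ^ 2 ^ k := by
    intro k
    induction k with
    | zero => intro f; simp
    | succ k ih =>
      intro f
      rw [← expand_eq_comp_X_pow, pow_succ, expand_mul, ZMod.expand_card,
        expand_eq_comp_X_pow, ih, ← pow_mul, mul_comm]
  have key : ∀ k : ℕ, s ∣ a ^ 4 ^ k - a := by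
    intro k
    induction k with
    | zero => simp
    | succ k ih =>
      have h := (sub_dvd_pow_sub_pow (a ^ 4 ^ k) a 4)
      have h' := dvd_add (ih.trans h) h4
      rw [← pow_mul, ← pow_succ] at h'
      simpa using h'
  have e4 : n - 1 = 2 ^ (2 * m) := by
    rw [hn, pow_mul]; norm_num
  rw [e4, hexp, pow_mul]
  exact key m
end

section
/- Let m be a positive integer and n = 4^m + 1. Let g ∈ F_2[X] be a monic divisor of X^n − 1 such that X + 1 divides g. Then there exists a polynomial a ∈ F_2[X] such that g divides a and (X^n − 1)/g divides a² + a + 1 in F_2[X]. -/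
open Polynomial

theorem aux_ring {R : Type*} [CommRing R] [CharP R 2] (m : ℕ) (x y : R)
    (hx : x ^ (4 ^ m + 1) = 1) (hy : (1 + x) * y = 1) : ∃ b : R, b ^ 2 + b + 1 = 0 := by
  have key : ∀ k : ℕ, ∃ b : R, b ^ 2 + b = y ^ (2 ^ k) + y := by
    intro k
    induction k with
    | zero => exact ⟨0, by simp [CharTwo.add_self_eq_zero]⟩
    | succ k ih =>
      obtain ⟨b, hb⟩ := ih
      refine ⟨b + y ^ (2 ^ k), ?_⟩
      have h2 : (2 : R) = 0 := CharTwo.two_eq_zero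
      rw [pow_succ 2 k, pow_mul]
      linear_combination hb + (b * y ^ 2 ^ k + y ^ 2 ^ k) * h2
  obtain ⟨b, hb⟩ := key (2 * m)
  refine ⟨b, ?_⟩
  rw [hb, pow_mul]
  norm_num
  have h2 : (2 : R) = 0 := CharTwo.two_eq_zero
  have hQ : (1 + x) ^ 4 ^ m = 1 + x ^ 4 ^ m := by
    have := add_pow_char_pow (R := R) (p := 2) (n := 2 * m) 1 x
    rw [pow_mul] at this
    norm_num at this
    exact this
  have hyQ : (1 + x ^ 4 ^ m) * y ^ 4 ^ m = 1 := by
    rw [← hQ, ← mul_pow, hy, one_pow]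
  rw [pow_succ] at hx
  generalize y ^ 4 ^ m = z at *
  generalize x ^ 4 ^ m = t at *
  -- multiply by the unit (1+x)(1+t)
  have h0 : (1 + x) * (1 + t) * (z + y + 1) = 0 := by
    linear_combination (1 + x) * hyQ + (1 + t) * hy + hx + (2 + x + t) * h2
  linear_combination (y * z) * h0 - (z + y + 1) * ((1 + t) * z) * hy - (z + y + 1) * hyQ

theorem stmt_17 (m n : ℕ) (hm : 0 < m) (hn : n = 4 ^ m + 1)
    (g : Polynomial (ZMod 2)) (hg : g.Monic) (hdvd : g ∣ X ^ n - 1)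
    (hX1 : (X + 1 : Polynomial (ZMod 2)) ∣ g) :
    ∃ a : Polynomial (ZMod 2), g ∣ a ∧ ((X ^ n - 1) /ₘ g) ∣ (a ^ 2 + a + 1) := by
  obtain ⟨h, hh⟩ := hdvd
  have hdiv : (X ^ n - 1) /ₘ g = h := by
    rw [hh]; exact mul_divByMonic_cancel_left h hg
  rw [hdiv]
  have hsep : (X ^ n - 1 : Polynomial (ZMod 2)).Separable := by
    rw [X_pow_sub_one_separable_iff, hn]
    have : ((4 : ℕ) : ZMod 2) = 0 := by decide
    push_cast at this ⊢
    rw [this, zero_pow hm.ne']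
    simp
  have hcop : IsCoprime g h := by
    rw [hh] at hsep
    exact hsep.isCoprime
  have hcX : IsCoprime (X + 1) h := hcop.of_isCoprime_of_dvd_left hX1
  obtain ⟨b, hb⟩ : ∃ b : Polynomial (ZMod 2), h ∣ b ^ 2 + b + 1 := by
    by_cases hu : IsUnit h
    · exact ⟨0, hu.dvd⟩
    let I := Ideal.span {h}
    have hI : I ≠ ⊤ := by
      rwa [Ne, Ideal.span_singleton_eq_top]
    haveI : Nontrivial (Polynomial (ZMod 2) ⧸ I) := Ideal.Quotient.nontrivial_iff.mpr hI
    haveI : CharP (Polynomial (ZMod 2) ⧸ I) 2 := 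
      charP_of_injective_algebraMap (algebraMap (ZMod 2) _).injective 2
    obtain ⟨u, v, huv⟩ := hcX
    have hmk : Ideal.Quotient.mk I h = 0 :=
      Ideal.Quotient.eq_zero_iff_mem.mpr (Ideal.mem_span_singleton_self h)
    obtain ⟨b, hb⟩ := aux_ring m (Ideal.Quotient.mk I X) (Ideal.Quotient.mk I u)
      (by
        have := congrArg (Ideal.Quotient.mk I) hh
        rw [map_mul, hmk, mul_zero, hn, map_sub, map_pow, map_one] at this
        exact sub_eq_zero.mp this)
      (by
        have := congrArg (Ideal.Quotient.mk I) huv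
        simp only [map_add, map_mul, hmk, mul_zero, map_one] at this
        linear_combination this)
    obtain ⟨b, rfl⟩ := Ideal.Quotient.mk_surjective b
    refine ⟨b, ?_⟩
    rw [← Ideal.mem_span_singleton, ← Ideal.Quotient.eq_zero_iff_mem]
    simpa using hb
  obtain ⟨u, v, huv⟩ := hcop
  refine ⟨u * g * b, ⟨u * b, by ring⟩, ?_⟩
  obtain ⟨c, hc⟩ := hb
  refine ⟨c - v * b * (u * g * b + b + 1), ?_⟩
  linear_combination hc + b * (u * g * b + b + 1) * huv
end

section
/- Let p be an odd prime, n a positive integer, and ζ = e^{2πi/p}. Let L and M be n×n matrices over F_p such that LᵀM is symmetric, the map φ(a) = (La, Ma) from F_p^n to F_p^n × F_p^n is injective, and the image S of φ is totally isotropic with respect to the symplectic inner product. Define the operator P = Σ_{a ∈ F_p^n} ζ^{2^{−1}·aᵀLᵀMa} U_{La} V_{Ma} on the space of functions F_p^n → ℂ, where 2^{−1} is the inverse of 2 in F_p. Then 𝒩 ∘ P ∘ 𝒩⁻¹ = P if and only if S is separately cyclic. -/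
open Matrix

/-- `ζ^c` for `c ∈ F_p`, where `ζ = e^{2πi/p}`; well defined via the canonical lift. -/
noncomputable def zetaPow (p : ℕ) (c : ZMod p) : ℂ :=
  Complex.exp (2 * Real.pi * Complex.I * (c.val : ℂ) / (p : ℂ))

/-- The inverse (left) cyclic shift `N⁻¹` on `F_p^n`. -/
def shiftNinv {p n : ℕ} [NeZero n] (u : Fin n → ZMod p) : Fin n → ZMod p :=
  fun i => u (i + 1)

/-- The Weyl operator `U_a` on functions `F_p^n → ℂ`: `(U_a f)(x) = f(x − a)`. -/
def weylU {p n : ℕ} (a : Fin n → ZMod p) (f : (Fin n → ZMod p) → ℂ) :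
    (Fin n → ZMod p) → ℂ :=
  fun x => f (x - a)

/-- The Weyl operator `V_b` on functions `F_p^n → ℂ`: `(V_b f)(x) = ζ^{bᵀx} f(x)`. -/
noncomputable def weylV {p n : ℕ} (b : Fin n → ZMod p) (f : (Fin n → ZMod p) → ℂ) :
    (Fin n → ZMod p) → ℂ :=
  fun x => zetaPow p (∑ i, b i * x i) * f x

/-- The shift operator `𝒩` on functions `F_p^n → ℂ`: `(𝒩 f)(x) = f(N⁻¹ x)`. -/
def opN {p n : ℕ} [NeZero n] (f : (Fin n → ZMod p) → ℂ) : (Fin n → ZMod p) → ℂ :=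
  fun x => f (shiftNinv x)

/-- The inverse `𝒩⁻¹` of the shift operator: `(𝒩⁻¹ f)(x) = f(N x)`. -/
def opNinv {p n : ℕ} [NeZero n] (f : (Fin n → ZMod p) → ℂ) : (Fin n → ZMod p) → ℂ :=
  fun x => f (shiftN x)

/-- The image `S` of the map `φ(a) = (La, Ma)`. -/
def phiRange (p n : ℕ) (L M : Matrix (Fin n) (Fin n) (ZMod p)) :
    Set ((Fin n → ZMod p) × (Fin n → ZMod p)) :=
  Set.range fun a : Fin n → ZMod p => (L.mulVec a, M.mulVec a)

/-- The operator `P = Σ_a ζ^{2⁻¹·aᵀLᵀMa} U_{La} V_{Ma}` on functions `F_p^n → ℂ`. -/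
noncomputable def stabProj (p n : ℕ) [NeZero p]
    (L M : Matrix (Fin n) (Fin n) (ZMod p)) :
    ((Fin n → ZMod p) → ℂ) → ((Fin n → ZMod p) → ℂ) :=
  fun f => ∑ a : Fin n → ZMod p,
    zetaPow p ((2⁻¹ : ZMod p) * (a ⬝ᵥ (Lᵀ * M).mulVec a)) •
      weylU (L.mulVec a) (weylV (M.mulVec a) f)

section Helpers18

variable {p n : ℕ}

theorem zetaPow_eq [NeZero p] (c : ZMod p) : zetaPow p c = ZMod.stdAddChar c := by
  rw [ZMod.stdAddChar_apply, ZMod.toCircle_apply, zetaPow]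

theorem zetaPow_add' [NeZero p] (c d : ZMod p) :
    zetaPow p (c + d) = zetaPow p c * zetaPow p d := by
  simp only [zetaPow_eq, AddChar.map_add_eq_mul]

theorem zetaPow_ne_zero' (c : ZMod p) : zetaPow p c ≠ 0 := Complex.exp_ne_zero _

theorem zetaPow_orth [Fact p.Prime] (w : Fin n → ZMod p) (hw : w ≠ 0) :
    ∑ y : Fin n → ZMod p, zetaPow p (w ⬝ᵥ y) = 0 := by
  let ψ : AddChar (Fin n → ZMod p) ℂ :=
    { toFun := fun y => zetaPow p (w ⬝ᵥ y)
      map_zero_eq_one' := by simp [zetaPow_eq]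
      map_add_eq_mul' := fun x y => by rw [dotProduct_add, zetaPow_add'] }
  have hψ : ψ ≠ 1 := by
    intro h
    obtain ⟨i, hi⟩ := Function.ne_iff.mp hw
    have h1 : ψ (Pi.single i 1) = 1 := by rw [h]; rfl
    have h2 : zetaPow p (w ⬝ᵥ Pi.single i 1) = 1 := h1
    rw [dotProduct_single_one, zetaPow_eq] at h2
    apply hi
    apply ZMod.injective_stdAddChar
    rw [h2]; simp
  exact AddChar.sum_eq_zero_of_ne_one hψ

/-- The sum of weighted Weyl operators over a finite set of labels. -/
noncomputable def weylSum (T : Finset ((Fin n → ZMod p) × (Fin n → ZMod p)))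
    (f : (Fin n → ZMod p) → ℂ) (x : Fin n → ZMod p) : ℂ :=
  ∑ t ∈ T, zetaPow p ((2⁻¹ : ZMod p) * (t.1 ⬝ᵥ t.2)) *
    (zetaPow p (t.2 ⬝ᵥ (x - t.1)) * f (x - t.1))

theorem weylSum_extract [Fact p.Prime]
    (T : Finset ((Fin n → ZMod p) × (Fin n → ZMod p)))
    (s : (Fin n → ZMod p) × (Fin n → ZMod p)) :
    ∑ y : Fin n → ZMod p, zetaPow p (- (s.2 ⬝ᵥ y)) *
      weylSum T (Pi.single y 1) (y + s.1) =
    if s ∈ T then zetaPow p ((2⁻¹ : ZMod p) * (s.1 ⬝ᵥ s.2)) *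
      (Fintype.card (Fin n → ZMod p) : ℂ) else 0 := by
  classical
  simp only [weylSum, Finset.mul_sum]
  rw [Finset.sum_comm]
  have key : ∀ t ∈ T, (∑ y : Fin n → ZMod p, zetaPow p (- (s.2 ⬝ᵥ y)) *
      (zetaPow p ((2⁻¹ : ZMod p) * (t.1 ⬝ᵥ t.2)) *
        (zetaPow p (t.2 ⬝ᵥ (y + s.1 - t.1)) *
          (Pi.single y 1 : (Fin n → ZMod p) → ℂ) (y + s.1 - t.1)))) =
      if t = s then zetaPow p ((2⁻¹ : ZMod p) * (s.1 ⬝ᵥ s.2)) *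
      (Fintype.card (Fin n → ZMod p) : ℂ) else 0 := by
    rintro ⟨t1, t2⟩ -
    obtain ⟨s1, s2⟩ := s
    by_cases h1 : t1 = s1
    · subst h1
      have h : ∀ y : Fin n → ZMod p, zetaPow p (- (s2 ⬝ᵥ y)) *
          (zetaPow p ((2⁻¹ : ZMod p) * (t1 ⬝ᵥ t2)) *
          (zetaPow p (t2 ⬝ᵥ (y + t1 - t1)) *
          (Pi.single y 1 : (Fin n → ZMod p) → ℂ) (y + t1 - t1))) =
          zetaPow p ((2⁻¹ : ZMod p) * (t1 ⬝ᵥ t2)) * zetaPow p ((t2 - s2) ⬝ᵥ y) := by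
        intro y
        rw [add_sub_cancel_right, Pi.single_eq_same, sub_dotProduct, sub_eq_add_neg,
          zetaPow_add']
        ring
      simp only [h]
      rw [← Finset.mul_sum]
      by_cases h2 : t2 = s2
      · subst h2
        simp [zetaPow_eq]
      · rw [zetaPow_orth _ (sub_ne_zero.mpr h2), if_neg (by simpa using h2), mul_zero]
    · rw [if_neg (by simp [h1])]
      apply Finset.sum_eq_zero
      intro y _
      rw [Pi.single_eq_of_ne]
      · simp
      · intro h
        apply h1
        have : s1 - t1 = 0 := by simpa [add_sub_assoc] using h
        exact (sub_eq_zero.mp this).symm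
  rw [Finset.sum_congr rfl key, Finset.sum_ite_eq']

theorem weylSum_injective [Fact p.Prime]
    (T T' : Finset ((Fin n → ZMod p) × (Fin n → ZMod p)))
    (h : weylSum T = weylSum T') : T = T' := by
  ext s
  have h1 := weylSum_extract T s
  rw [h, weylSum_extract T' s] at h1
  have hne : zetaPow p ((2⁻¹ : ZMod p) * (s.1 ⬝ᵥ s.2)) *
      (Fintype.card (Fin n → ZMod p) : ℂ) ≠ 0 :=
    mul_ne_zero (zetaPow_ne_zero' _) (Nat.cast_ne_zero.mpr Fintype.card_ne_zero)
  by_cases a : s ∈ T <;> by_cases b : s ∈ T' <;> simp_all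

theorem dot_shift [NeZero n] (u v : Fin n → ZMod p) : shiftN u ⬝ᵥ shiftN v = u ⬝ᵥ v := by
  simp only [dotProduct, shiftN]
  exact Equiv.sum_comp (Equiv.subRight (1 : Fin n)) (fun i => u i * v i)

theorem shiftN_shiftNinv [NeZero n] (u : Fin n → ZMod p) : shiftN (shiftNinv u) = u := by
  funext i; simp [shiftN, shiftNinv]

theorem shiftNinv_shiftN [NeZero n] (u : Fin n → ZMod p) : shiftNinv (shiftN u) = u := by
  funext i; simp [shiftN, shiftNinv]

theorem shiftN_inj [NeZero n] : Function.Injective (shiftN : (Fin n → ZMod p) → _) :=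
  Function.LeftInverse.injective shiftNinv_shiftN

theorem shiftN_sub [NeZero n] (u v : Fin n → ZMod p) :
    shiftN (u - v) = shiftN u - shiftN v := rfl

/-- The shift on pairs. -/
def shiftPair [NeZero n] (t : (Fin n → ZMod p) × (Fin n → ZMod p)) :
    (Fin n → ZMod p) × (Fin n → ZMod p) := (shiftN t.1, shiftN t.2)

theorem shiftPair_inj [NeZero n] : Function.Injective
    (shiftPair : (Fin n → ZMod p) × (Fin n → ZMod p) → _) := by
  rintro ⟨a, b⟩ ⟨c, d⟩ h
  simp only [shiftPair, Prod.mk.injEq] at h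
  rw [shiftN_inj h.1, shiftN_inj h.2]

open Classical in
theorem weylSum_shift [NeZero n] (T : Finset ((Fin n → ZMod p) × (Fin n → ZMod p))) :
    opN ∘ weylSum T ∘ opNinv = weylSum (T.image shiftPair) := by
  funext f x
  simp only [Function.comp, opN, weylSum]
  rw [Finset.sum_image (fun a _ b _ h => shiftPair_inj h)]
  refine Finset.sum_congr rfl fun t _ => ?_
  have hx : shiftN (shiftNinv x - t.1) = x - shiftN t.1 := by
    rw [shiftN_sub, shiftN_shiftNinv]
  simp only [shiftPair, opNinv, dot_shift, ← hx]

open Classical in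
theorem stabProj_eq [Fact p.Prime] (L M : Matrix (Fin n) (Fin n) (ZMod p))
    (hinj : Function.Injective fun a : Fin n → ZMod p => (L.mulVec a, M.mulVec a)) :
    stabProj p n L M = weylSum (Finset.univ.image
      fun a : Fin n → ZMod p => (L.mulVec a, M.mulVec a)) := by
  funext f x
  rw [stabProj, weylSum, Finset.sum_image (fun a _ b _ h => hinj h), Finset.sum_apply]
  refine Finset.sum_congr rfl fun a _ => ?_
  have h : a ⬝ᵥ (Lᵀ * M).mulVec a = L.mulVec a ⬝ᵥ M.mulVec a := by
    rw [← Matrix.mulVec_mulVec, Matrix.dotProduct_mulVec, Matrix.vecMul_transpose]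
  rw [h]
  rfl

end Helpers18

/-- Let `p` be an odd prime, `n` a positive integer, and `L, M`
`n×n` matrices over `F_p` with `LᵀM` symmetric such that `φ(a) = (La, Ma)` is
injective and its image `S` is totally isotropic.  With
`P = Σ_a ζ^{2⁻¹·aᵀLᵀMa} U_{La} V_{Ma}`, we have `𝒩 ∘ P ∘ 𝒩⁻¹ = P` iff `S` is
separately cyclic. -/
theorem stmt_18 (p n : ℕ) [Fact p.Prime] (hodd : p ≠ 2) [NeZero n]
    (L M : Matrix (Fin n) (Fin n) (ZMod p))
    (hsym : (Lᵀ * M).IsSymm)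
    (hinj : Function.Injective fun a : Fin n → ZMod p => (L.mulVec a, M.mulVec a))
    (hiso : ∀ u ∈ phiRange p n L M, ∀ v ∈ phiRange p n L M, sympInner u v = 0) :
    opN ∘ stabProj p n L M ∘ opNinv = stabProj p n L M ↔
      ∀ ab ∈ phiRange p n L M, (shiftN ab.1, shiftN ab.2) ∈ phiRange p n L M := by
  classical
  rw [stabProj_eq L M hinj, weylSum_shift]
  set T : Finset ((Fin n → ZMod p) × (Fin n → ZMod p)) := Finset.univ.image
      fun a : Fin n → ZMod p => (L.mulVec a, M.mulVec a) with hT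
  have hmem : ∀ s, s ∈ phiRange p n L M ↔ s ∈ T := by
    intro s; simp [hT, phiRange]
  simp only [hmem]
  constructor
  · intro h ab hab
    have h1 := weylSum_injective _ _ h
    have h2 : shiftPair ab ∈ T.image shiftPair := Finset.mem_image_of_mem _ hab
    rw [h1] at h2
    exact h2
  · intro h
    have : T.image shiftPair = T := by
      apply Finset.eq_of_subset_of_card_le
      · intro s hs
        obtain ⟨t, ht, rfl⟩ := Finset.mem_image.mp hs
        exact h t ht
      · rw [Finset.card_image_of_injective _ shiftPair_inj]
    rw [this]
end
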